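/- arXiv:math/0107082 — 3 statements merged into one kernel-verified Lean document; each statement's English description precedes it below -/
import Mathlib

section
/- Define the balanced negapolygamma ψ^{(-k)}(q) = (1/k!)[A_k(q) - H_{k-1} B_k(q)] for k ≥ 1, where A_k(q) = k ζ'(1-k,q), H_r is the r-th harmonic number (H_0 = 0), and B_k is the Bernoulli polynomial. Then d/dq ψ^{(-k)}(q) = ψ^{(-k+1)}(q) for k ≥ 2 and q > 0. -/
open Complex

/-- The `k`-th Bernoulli polynomial, evaluated at a real number. -/
noncomputable def bernoulliPoly (k : ℕ) (x : ℝ) : ℝ :=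
  Polynomial.eval x ((Polynomial.bernoulli k).map (algebraMap ℚ ℝ))

/-- The `r`-th harmonic number, `H_0 = 0`. -/
noncomputable def harmonicNum (r : ℕ) : ℝ := ∑ i ∈ Finset.range r, (1 : ℝ) / (i + 1)

/-- The balanced negapolygamma `ψ^{(-k)}(q) = (1/k!)[A_k(q) - H_{k-1} B_k(q)]`,
where `A_k(q) = k ζ'(1-k,q)` is defined via (any) analytic continuation `F` of the
Hurwitz zeta function in its first variable. -/
noncomputable def balancedNegapolygamma (F : ℂ → ℝ → ℂ) (k : ℕ) (q : ℝ) : ℂ :=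
  (1 / (k.factorial : ℂ)) *
    ((k : ℂ) * deriv (fun z => F z q) (1 - k) -
      (harmonicNum (k - 1) : ℂ) * (bernoulliPoly k q : ℂ))

open Filter Topology Set

/-- The Dirichlet series of the Hurwitz zeta function. -/
noncomputable def hzSeries (z : ℂ) (q : ℝ) : ℂ := ∑' n : ℕ, 1 / ((n : ℂ) + (q : ℂ)) ^ z

lemma hz_term_norm (z : ℂ) {x : ℝ} (hx : 0 < x) : ‖1 / (x : ℂ) ^ z‖ = x ^ (-z.re) := by
  rw [norm_div, norm_one, Complex.norm_cpow_eq_rpow_re_of_pos hx, Real.rpow_neg hx.le, one_div]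

lemma hz_term_bound {σ : ℝ} (hσ : 0 < σ) {z : ℂ} (hz : σ ≤ z.re) {q : ℝ} (hq : 0 < q) (n : ℕ) :
    ‖1 / (((n + 1 : ℕ) : ℂ) + (q : ℂ)) ^ z‖ ≤ 1 / ((n + 1 : ℕ) : ℝ) ^ σ := by
  have h1 : (1 : ℝ) ≤ ((n + 1 : ℕ) : ℝ) := by push_cast; linarith [n.cast_nonneg (α := ℝ)]
  have h := hz_term_norm z (x := ((n + 1 : ℕ) : ℝ) + q) (by positivity)
  rw [Complex.ofReal_add, Complex.ofReal_natCast] at h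
  rw [h, one_div, ← Real.rpow_neg (by positivity)]
  calc (((n + 1 : ℕ) : ℝ) + q) ^ (-z.re) ≤ (((n + 1 : ℕ) : ℝ)) ^ (-z.re) :=
        Real.rpow_le_rpow_of_nonpos (by positivity) (by linarith) (by linarith)
    _ ≤ _ := Real.rpow_le_rpow_of_exponent_le h1 (by linarith)

lemma hz_bound_summable {σ : ℝ} (hσ : 1 < σ) :
    Summable (fun n : ℕ => 1 / ((n + 1 : ℕ) : ℝ) ^ σ) :=
  (summable_nat_add_iff (f := fun n : ℕ => 1 / (n : ℝ) ^ σ) 1).2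
    (Real.summable_one_div_nat_rpow.2 hσ)

lemma hz_tail_summable {z : ℂ} (hz : 1 < z.re) {q : ℝ} (hq : 0 < q) :
    Summable (fun n : ℕ => 1 / (((n + 1 : ℕ) : ℂ) + (q : ℂ)) ^ z) :=
  Summable.of_norm_bounded (hz_bound_summable hz)
    (fun n => hz_term_bound (by linarith) le_rfl hq n)

lemma hz_split {z : ℂ} (hz : 1 < z.re) {q : ℝ} (hq : 0 < q) :
    hzSeries z q = 1 / (q : ℂ) ^ z + ∑' n : ℕ, 1 / (((n + 1 : ℕ) : ℂ) + (q : ℂ)) ^ z := by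
  have h := ((summable_nat_add_iff (f := fun n : ℕ => 1 / ((n : ℂ) + (q : ℂ)) ^ z) 1).1
    (hz_tail_summable hz hq)).tsum_eq_zero_add
  rw [hzSeries, h]
  simp

lemma hz_shift {z : ℂ} (hz : 1 < z.re) {q : ℝ} (hq : 0 < q) :
    hzSeries z q = 1 / (q : ℂ) ^ z + hzSeries z (q + 1) := by
  rw [hz_split hz hq, hzSeries]
  congr 1
  refine tsum_congr fun n => ?_
  push_cast
  ring_nf

lemma hz_continuousOn :
    ContinuousOn (fun p : ℂ × ℝ => hzSeries p.1 p.2) {p | 1 < p.1.re ∧ 0 < p.2} := by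
  have key : ∀ σ : ℝ, 1 < σ →
      ContinuousOn (fun p : ℂ × ℝ => hzSeries p.1 p.2) {p | σ < p.1.re ∧ 0 < p.2} := by
    intro σ hσ
    have hc : ∀ (c : ℕ), ContinuousOn (fun p : ℂ × ℝ => 1 / ((c : ℂ) + (p.2 : ℂ)) ^ p.1)
        {p | σ < p.1.re ∧ 0 < p.2} := by
      intro c p hp
      have hpos : 0 < (c : ℝ) + p.2 := by have := hp.2; positivity
      have hs : (c : ℂ) + (p.2 : ℂ) ∈ Complex.slitPlane := by
        left; simpa using hpos
      have hne : (c : ℂ) + (p.2 : ℂ) ≠ 0 := Complex.slitPlane_ne_zero hs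
      refine ContinuousAt.continuousWithinAt ?_
      refine ContinuousAt.div continuousAt_const ?_ (by simp [Complex.cpow_eq_zero_iff, hne])
      refine ContinuousAt.cpow (by fun_prop) (by fun_prop) hs
    have h1 := continuousOn_tsum (fun n : ℕ => hc (n + 1)) (hz_bound_summable hσ)
      (fun n p hp => hz_term_bound (by linarith) (le_of_lt hp.1) hp.2 n)
    have h0 := hc 0
    refine (h0.add h1).congr fun p hp => ?_
    rw [hz_split (hσ.trans hp.1) hp.2]
    simp
  intro p hp
  obtain ⟨σ, h1, h2⟩ := exists_between hp.1
  have ho : IsOpen {p : ℂ × ℝ | σ < p.1.re ∧ 0 < p.2} :=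
    IsOpen.and (isOpen_lt continuous_const (Complex.continuous_re.comp continuous_fst))
      (isOpen_lt continuous_const continuous_snd)
  exact ((key σ h1).continuousAt (ho.mem_nhds ⟨h2, hp.2⟩)).continuousWithinAt

lemma hz_term_deriv (z : ℂ) (c : ℕ) {q : ℝ} (hq : 0 < q) :
    HasDerivAt (fun q : ℝ => 1 / ((c : ℂ) + (q : ℂ)) ^ z)
      (-z * (1 / ((c : ℂ) + (q : ℂ)) ^ (z + 1))) q := by
  have hpos : 0 < (c : ℝ) + q := by positivity
  have hs : (c : ℂ) + (q : ℂ) ∈ Complex.slitPlane := by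
    left; simpa using hpos
  have h0 : HasDerivAt (fun w : ℂ => (c : ℂ) + w) 1 (q : ℂ) := (hasDerivAt_id _).const_add _
  have h1 := (h0.cpow_const (c := -z) hs).comp_ofReal
  have e1 : (fun q : ℝ => 1 / ((c : ℂ) + (q : ℂ)) ^ z) =
      fun q : ℝ => ((c : ℂ) + (q : ℂ)) ^ (-z) := by
    funext x; rw [Complex.cpow_neg, one_div]
  rw [e1]
  convert h1 using 1
  rw [show -z - 1 = -(z + 1) by ring, Complex.cpow_neg, one_div, mul_one]

lemma hz_hasDerivAt {z : ℂ} (hz : 1 < z.re) {q : ℝ} (hq : 0 < q) :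
    HasDerivAt (fun q : ℝ => hzSeries z q) (-z * hzSeries (z + 1) q) q := by
  have hz1 : 1 < (z + 1).re := by simp; linarith
  have h1 := hasDerivAt_tsum_of_isPreconnected
    (g := fun (n : ℕ) (q : ℝ) => 1 / (((n + 1 : ℕ) : ℂ) + (q : ℂ)) ^ z)
    (g' := fun (n : ℕ) (q : ℝ) => -z * (1 / (((n + 1 : ℕ) : ℂ) + (q : ℂ)) ^ (z + 1)))
    ((hz_bound_summable hz1).mul_left ‖z‖) isOpen_Ioi (convex_Ioi (0 : ℝ)).isPreconnected
    (fun n y hy => hz_term_deriv z (n + 1) hy)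
    (fun n y hy => by
      rw [norm_mul, norm_neg]
      gcongr
      exact hz_term_bound (by linarith) le_rfl hy n)
    hq (hz_tail_summable hz hq) hq
  have h0 := hz_term_deriv z 0 hq
  have h2 := (h0.add h1).congr_of_eventuallyEq (f₁ := fun q : ℝ => hzSeries z q) (by
    filter_upwards [lt_mem_nhds hq] with t ht
    rw [hz_split hz ht]; simp)
  rw [tsum_mul_left] at h2
  rw [hz_split hz1 hq, mul_add]
  simpa using h2

/-- Parametric integrals of jointly continuous, holomorphic functions. -/
lemma hz_deriv_cont {U : Set ℂ} (hU : IsOpen U) {f : ℂ → ℝ → ℂ}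
    (hc : Continuous (fun p : U × ℝ => f p.1 p.2))
    (hd : ∀ s, DifferentiableOn ℂ (fun z => f z s) U) {z : ℂ} (hz : z ∈ U) :
    Continuous (fun s => deriv (fun z => f z s) z) := by
  rw [continuous_iff_continuousAt]
  intro s0
  have h : TendstoLocallyUniformlyOn (fun s z => f z s) (fun z => f z s0) (𝓝 s0) U := by
    rw [tendstoLocallyUniformlyOn_iff_tendstoLocallyUniformly_comp_coe]
    rw [Metric.tendstoLocallyUniformly_iff]
    intro ε hε x
    have h1 := Metric.tendsto_nhds.1 (hc.tendsto (x, s0)) (ε / 2) (by positivity)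
    rw [nhds_prod_eq, eventually_prod_iff] at h1
    obtain ⟨pa, ha, pb, hb, hab⟩ := h1
    refine ⟨{y | pa y}, ha, ?_⟩
    filter_upwards [hb] with s hs y hy
    have e1 := hab hy hs
    have e2 := hab hy hb.self_of_nhds
    rw [dist_comm] at e1
    have e3 := dist_triangle (f y s0) (f x s0) (f y s)
    simp only [Function.comp_apply] at *
    linarith
  have h2 := h.deriv (Eventually.of_forall hd) hU
  exact h2.tendsto_at hz

lemma hz_integral_deriv {U : Set ℂ} (hU : IsOpen U) {f : ℂ → ℝ → ℂ}
    (hc : Continuous (fun p : U × ℝ => f p.1 p.2))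
    (hd : ∀ s, DifferentiableOn ℂ (fun z => f z s) U) {z : ℂ} (hz : z ∈ U) (a b : ℝ) :
    HasDerivAt (fun z => ∫ s in a..b, f z s) (∫ s in a..b, deriv (fun z => f z s) z) z := by
  obtain ⟨R, hR, hRU⟩ := Metric.isOpen_iff.1 hU z hz
  set r := R / 3 with hr
  have hr0 : 0 < r := by positivity
  have hball : ∀ w ∈ Metric.closedBall z (2 * r), w ∈ U := fun w hw => hRU (by
    rw [Metric.mem_closedBall] at hw; rw [Metric.mem_ball]; linarith)
  have hco : ContinuousOn (fun p : ℂ × ℝ => f p.1 p.2) (U ×ˢ univ) := by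
    rw [continuousOn_iff_continuous_domRestrict]
    exact hc.comp (f := fun p : (U ×ˢ (univ : Set ℝ) : Set (ℂ × ℝ)) =>
      ((⟨p.1.1, p.2.1⟩, p.1.2) : U × ℝ)) (by fun_prop)
  have hcomp : IsCompact (Metric.closedBall z (2 * r) ×ˢ uIcc a b) :=
    (isCompact_closedBall _ _).prod isCompact_uIcc
  obtain ⟨M, hM⟩ := hcomp.exists_bound_of_continuousOn
    (hco.mono (prod_mono hball (subset_univ _)))
  have hcs : ∀ w ∈ U, Continuous (fun s => f w s) := fun w hw =>
    hc.comp (f := fun s : ℝ => ((⟨w, hw⟩, s) : U × ℝ)) (by fun_prop)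
  refine (intervalIntegral.hasDerivAt_integral_of_dominated_loc_of_deriv_le
    (F' := fun z s => deriv (fun z => f z s) z) (bound := fun _ => M / r)
    (Metric.ball_mem_nhds z hr0) ?_ ?_ ?_ ?_ ?_ ?_).2
  · filter_upwards [hU.mem_nhds hz] with w hw
    exact (hcs w hw).aestronglyMeasurable
  · exact (hcs z hz).intervalIntegrable _ _
  · exact (hz_deriv_cont hU hc hd hz).aestronglyMeasurable
  · refine Eventually.of_forall fun s hs w hw => ?_
    have hsub : Metric.closedBall w r ⊆ Metric.closedBall z (2 * r) := by
      apply Metric.closedBall_subset_closedBall'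
      rw [Metric.mem_ball] at hw; linarith
    refine Complex.norm_deriv_le_of_forall_mem_sphere_norm_le hr0 ?_ ?_
    · refine DifferentiableOn.diffContOnCl ?_
      rw [closure_ball _ hr0.ne']
      exact (hd s).mono (fun x hx => hball x (hsub hx))
    · intro x hx
      exact hM (x, s) ⟨hsub (Metric.sphere_subset_closedBall hx), uIoc_subset_uIcc hs⟩
  · exact intervalIntegrable_const
  · refine Eventually.of_forall fun s hs w hw => ?_
    refine ((hd s).differentiableAt (hU.mem_nhds (hball w ?_))).hasDerivAt
    exact Metric.ball_subset_closedBall (Metric.ball_subset_ball (by linarith) hw)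

lemma hz_identity {f g : ℂ → ℂ} (hf : DifferentiableOn ℂ f {(1 : ℂ)}ᶜ)
    (hg : DifferentiableOn ℂ g {(1 : ℂ)}ᶜ) (h : ∀ z : ℂ, 1 < z.re → f z = g z) {z : ℂ}
    (hz : z ≠ 1) : f z = g z := by
  have hpre : IsPreconnected ({(1 : ℂ)}ᶜ) :=
    (isConnected_compl_singleton_of_one_lt_rank (by simp) (1 : ℂ)).isPreconnected
  have ho : IsOpen ({(1 : ℂ)}ᶜ) := isOpen_compl_singleton
  refine (hf.analyticOnNhd ho).eqOn_of_preconnected_of_eventuallyEq (hg.analyticOnNhd ho) hpre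
    (z₀ := 2) (by simp) ?_ hz
  filter_upwards [(isOpen_lt continuous_const Complex.continuous_re).mem_nhds
    (show (1 : ℝ) < (2 : ℂ).re by simp)] with w hw using h w hw

lemma hz_pos_induction {P : ℝ → Prop} (h0 : ∀ q, 0 < q → q ≤ 1 → P q)
    (h1 : ∀ q, 0 < q → P q → P (q + 1)) : ∀ q, 0 < q → P q := by
  have key : ∀ n : ℕ, ∀ q : ℝ, 0 < q → q ≤ n + 1 → P q := by
    intro n
    induction n with
    | zero => intro q hq hq1; exact h0 q hq (by simpa using hq1)
    | succ n ih =>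
      intro q hq hq1
      push_cast at hq1
      rcases le_or_gt q 1 with h | h
      · exact h0 q hq h
      · have := h1 (q - 1) (by linarith) (ih (q - 1) (by linarith) (by linarith))
        simpa using this
  intro q hq
  obtain ⟨n, hn⟩ := exists_nat_ge q
  exact key n q hq (by linarith)

/-- `(z - 1) ζ(z, q)`, with the singularity removed. -/
noncomputable def hzH (F : ℂ → ℝ → ℂ) (z : ℂ) (q : ℝ) : ℂ :=
  if z = 1 then 1 else (z - 1) * F z q

lemma hzH_of_ne (F : ℂ → ℝ → ℂ) {z : ℂ} (hz : z ≠ 1) (q : ℝ) :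
    hzH F z q = (z - 1) * F z q := if_neg hz

lemma hz_ne_one {z : ℂ} (hz : 1 < z.re) : z ≠ 1 := by
  rintro rfl
  simp at hz

lemma hz_cpow_diff {q : ℝ} (hq : 0 < q) : Differentiable ℂ (fun z : ℂ => 1 / (q : ℂ) ^ z) := by
  have hne : (q : ℂ) ≠ 0 := by exact_mod_cast hq.ne'
  intro z
  refine DifferentiableAt.div (differentiableAt_const _) ?_ (by simp [Complex.cpow_eq_zero_iff, hne])
  exact DifferentiableAt.const_cpow differentiableAt_id (Or.inl hne)

lemma hz_residue {F : ℂ → ℝ → ℂ}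
    (hF : ∀ q : ℝ, 0 < q → DifferentiableOn ℂ (fun z => F z q) {(1 : ℂ)}ᶜ)
    (hFeq : ∀ z : ℂ, 1 < z.re → ∀ q : ℝ, 0 < q → F z q = hzSeries z q) :
    ∀ q : ℝ, 0 < q → Tendsto (fun z => (z - 1) * F z q) (𝓝[≠] 1) (𝓝 1) := by
  apply hz_pos_induction
  · intro q hq hq1
    refine (HurwitzZeta.hurwitzZeta_residue_one (q : UnitAddCircle)).congr' ?_
    filter_upwards [self_mem_nhdsWithin] with z hz
    congr 1
    refine hz_identity (f := HurwitzZeta.hurwitzZeta (q : UnitAddCircle))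
      (fun w hw => (HurwitzZeta.differentiableAt_hurwitzZeta _ hw).differentiableWithinAt)
      (hF q hq) ?_ hz
    intro w hw
    rw [hFeq w hw q hq, hzSeries]
    exact (HurwitzZeta.hasSum_hurwitzZeta_of_one_lt_re ⟨hq.le, hq1⟩ hw).tsum_eq.symm
  · intro q hq ih
    have h2 : Tendsto (fun z : ℂ => (z - 1) * (1 / (q : ℂ) ^ z)) (𝓝[≠] 1) (𝓝 0) := by
      have hcont : Continuous (fun z : ℂ => (z - 1) * (1 / (q : ℂ) ^ z)) :=
        (continuous_id.sub continuous_const).mul (hz_cpow_diff hq).continuous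
      have := (hcont.tendsto 1).mono_left (nhdsWithin_le_nhds (s := {(1 : ℂ)}ᶜ))
      simpa using this
    have h3 := ih.sub h2
    rw [sub_zero] at h3
    refine h3.congr' ?_
    filter_upwards [self_mem_nhdsWithin] with z hz
    rw [← mul_sub]
    congr 1
    refine hz_identity (f := fun z => F z q - 1 / (q : ℂ) ^ z)
      ((hF q hq).sub (hz_cpow_diff hq).differentiableOn) (hF (q + 1) (by linarith)) ?_ hz
    intro w hw
    rw [hFeq w hw q hq, hFeq w hw (q + 1) (by linarith), hz_shift hw hq]
    ring

lemma hzH_differentiable {F : ℂ → ℝ → ℂ}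
    (hF : ∀ q : ℝ, 0 < q → DifferentiableOn ℂ (fun z => F z q) {(1 : ℂ)}ᶜ)
    (hFeq : ∀ z : ℂ, 1 < z.re → ∀ q : ℝ, 0 < q → F z q = hzSeries z q)
    {q : ℝ} (hq : 0 < q) : Differentiable ℂ (fun z => hzH F z q) := by
  have hd : DifferentiableOn ℂ (fun z => hzH F z q) (univ \ {(1 : ℂ)}) := by
    have : DifferentiableOn ℂ (fun z => (z - 1) * F z q) (univ \ {(1 : ℂ)}) := by
      refine DifferentiableOn.mul (by fun_prop) ((hF q hq).mono ?_)
      intro z hz; exact hz.2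
    exact this.congr fun z hz => hzH_of_ne F hz.2 q
  have hc : ContinuousAt (fun z => hzH F z q) 1 := by
    rw [continuousAt_iff_punctured_nhds]
    have h1 : hzH F 1 q = 1 := if_pos rfl
    rw [h1]
    refine (hz_residue hF hFeq q hq).congr' ?_
    filter_upwards [self_mem_nhdsWithin] with z hz
    exact (hzH_of_ne F hz q).symm
  have := (Complex.differentiableOn_compl_singleton_and_continuousAt_iff
    (univ_mem : (univ : Set ℂ) ∈ 𝓝 1)).1 ⟨hd, hc⟩
  exact differentiableOn_univ.1 this

/-- Joint continuity on a right half plane. -/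
def hzCont (F : ℂ → ℝ → ℂ) (a : ℝ) : Prop :=
  Continuous (fun p : {z : ℂ | a < z.re} × ℝ => hzH F p.1 (Real.exp p.2))

lemma hzCont_base {F : ℂ → ℝ → ℂ}
    (hFeq : ∀ z : ℂ, 1 < z.re → ∀ q : ℝ, 0 < q → F z q = hzSeries z q) : hzCont F 1 := by
  have h : Continuous (fun p : {z : ℂ | (1 : ℝ) < z.re} × ℝ =>
      ((p.1 : ℂ) - 1) * hzSeries p.1 (Real.exp p.2)) := by
    refine Continuous.mul (by fun_prop) ?_
    exact hz_continuousOn.comp_continuous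
      (f := fun p : {z : ℂ | (1 : ℝ) < z.re} × ℝ => ((p.1 : ℂ), Real.exp p.2))
      (by fun_prop) (fun p => ⟨p.1.2, Real.exp_pos _⟩)
  unfold hzCont
  convert h using 2 with p
  rw [hzH_of_ne F (hz_ne_one p.1.2), hFeq _ p.1.2 _ (Real.exp_pos _)]

lemma hz_halfplane_open (a : ℝ) : IsOpen {z : ℂ | a < z.re} :=
  isOpen_lt continuous_const Complex.continuous_re

lemma hz_shift_cont {F : ℂ → ℝ → ℂ} {a : ℝ} (hc : hzCont F a) :
    Continuous (fun p : {z : ℂ | a - 1 < z.re} × ℝ =>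
      hzH F (p.1 + 1) (Real.exp p.2) * (Real.exp p.2 : ℂ)) := by
  refine Continuous.mul ?_ (by fun_prop)
  exact Continuous.comp hc
    (f := fun p : {z : ℂ | a - 1 < z.re} × ℝ =>
      ((⟨(p.1 : ℂ) + 1, by
        have h : a - 1 < (p.1 : ℂ).re := p.1.2
        simp only [mem_ofPred_eq, Complex.add_re, Complex.one_re]
        linarith⟩, p.2) :
        {z : ℂ | a < z.re} × ℝ)) (by fun_prop)

lemma hz_shift_diff {F : ℂ → ℝ → ℂ}
    (hF : ∀ q : ℝ, 0 < q → DifferentiableOn ℂ (fun z => F z q) {(1 : ℂ)}ᶜ)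
    (hFeq : ∀ z : ℂ, 1 < z.re → ∀ q : ℝ, 0 < q → F z q = hzSeries z q) (s : ℝ) :
    Differentiable ℂ (fun z : ℂ => hzH F (z + 1) (Real.exp s) * (Real.exp s : ℂ)) := by
  have h := hzH_differentiable hF hFeq (Real.exp_pos s)
  have h2 : Differentiable ℂ (fun z : ℂ => hzH F (z + 1) (Real.exp s)) :=
    h.comp (differentiable_id.add_const (1 : ℂ))
  exact h2.mul_const _

lemma hz_formula {F : ℂ → ℝ → ℂ}
    (hF : ∀ q : ℝ, 0 < q → DifferentiableOn ℂ (fun z => F z q) {(1 : ℂ)}ᶜ)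
    (hFeq : ∀ z : ℂ, 1 < z.re → ∀ q : ℝ, 0 < q → F z q = hzSeries z q)
    {a : ℝ} (ha : a ≤ 1) (hc : hzCont F a) {z : ℂ} (hz : a - 1 < z.re) (u : ℝ) :
    hzH F z (Real.exp u) = hzH F z 1 -
      (z - 1) * ∫ s in (0 : ℝ)..u, hzH F (z + 1) (Real.exp s) * (Real.exp s : ℂ) := by
  have ho := hz_halfplane_open (a - 1)
  have hpre : IsPreconnected {z : ℂ | a - 1 < z.re} :=
    (convex_halfSpace_re_gt (a - 1)).isPreconnected
  have hd1 : DifferentiableOn ℂ (fun z => hzH F z (Real.exp u)) {z : ℂ | a - 1 < z.re} :=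
    (hzH_differentiable hF hFeq (Real.exp_pos u)).differentiableOn
  have hd2 : DifferentiableOn ℂ (fun z => hzH F z 1 -
      (z - 1) * ∫ s in (0 : ℝ)..u, hzH F (z + 1) (Real.exp s) * (Real.exp s : ℂ))
      {z : ℂ | a - 1 < z.re} := by
    refine DifferentiableOn.sub (hzH_differentiable hF hFeq one_pos).differentiableOn
      (DifferentiableOn.mul (by fun_prop) ?_)
    intro w hw
    exact (hz_integral_deriv ho
      (f := fun z s => hzH F (z + 1) (Real.exp s) * (Real.exp s : ℂ)) (hz_shift_cont hc)
      (fun s => (hz_shift_diff hF hFeq s).differentiableOn) hw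
      0 u).differentiableAt.differentiableWithinAt
  refine (hd1.analyticOnNhd ho).eqOn_of_preconnected_of_eventuallyEq (hd2.analyticOnNhd ho) hpre
    (z₀ := 2) (by simp; linarith) ?_ hz
  filter_upwards [(hz_halfplane_open 1).mem_nhds (show (1 : ℝ) < (2 : ℂ).re by simp)] with w hw
  replace hw : 1 < w.re := hw
  have hw1 : 1 < (w + 1).re := by simp; linarith
  have hder : ∀ s ∈ uIcc 0 u, HasDerivAt (fun s : ℝ => hzH F w (Real.exp s))
      (-(w - 1) * (hzH F (w + 1) (Real.exp s) * (Real.exp s : ℂ))) s := by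
    intro s _
    have h1 := ((hz_hasDerivAt hw (Real.exp_pos s)).scomp s (Real.hasDerivAt_exp s)).const_mul
      (w - 1)
    have e1 : (fun s : ℝ => hzH F w (Real.exp s)) =
        fun s : ℝ => (w - 1) * ((fun q => hzSeries w q) ∘ Real.exp) s := by
      funext t
      rw [hzH_of_ne F (hz_ne_one hw), hFeq _ hw _ (Real.exp_pos _)]; rfl
    rw [e1, hzH_of_ne F (hz_ne_one hw1), hFeq _ hw1 _ (Real.exp_pos _)]
    refine h1.congr_deriv ?_
    rw [Complex.real_smul]
    ring
  have hint : Continuous (fun s : ℝ => hzH F (w + 1) (Real.exp s) * (Real.exp s : ℂ)) :=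
    (hz_shift_cont hc).comp (f := fun s : ℝ =>
      ((⟨w, by simp; linarith⟩, s) : {z : ℂ | a - 1 < z.re} × ℝ)) (by fun_prop)
  have := intervalIntegral.integral_eq_sub_of_hasDerivAt hder
    ((hint.const_mul _).intervalIntegrable _ _)
  rw [intervalIntegral.integral_const_mul, Real.exp_zero] at this
  linear_combination -this

lemma hzCont_step {F : ℂ → ℝ → ℂ}
    (hF : ∀ q : ℝ, 0 < q → DifferentiableOn ℂ (fun z => F z q) {(1 : ℂ)}ᶜ)
    (hFeq : ∀ z : ℂ, 1 < z.re → ∀ q : ℝ, 0 < q → F z q = hzSeries z q)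
    {a : ℝ} (ha : a ≤ 1) (hc : hzCont F a) : hzCont F (a - 1) := by
  have h1 : Continuous (fun p : {z : ℂ | a - 1 < z.re} × ℝ => hzH F p.1 1 - ((p.1 : ℂ) - 1) *
      ∫ s in (0 : ℝ)..p.2, hzH F (p.1 + 1) (Real.exp s) * (Real.exp s : ℂ)) := by
    refine Continuous.sub ?_ (Continuous.mul (by fun_prop) ?_)
    · exact (hzH_differentiable hF hFeq one_pos).continuous.comp
        (f := fun p : {z : ℂ | a - 1 < z.re} × ℝ => (p.1 : ℂ)) (by fun_prop)
    · exact intervalIntegral.continuous_parametric_primitive_of_continuous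
        (f := fun (z : {z : ℂ | a - 1 < z.re}) (s : ℝ) =>
          hzH F (z + 1) (Real.exp s) * (Real.exp s : ℂ)) (hz_shift_cont hc)
  unfold hzCont
  convert h1 using 2 with p
  exact hz_formula hF hFeq ha hc p.1.2 p.2

lemma hzCont_all {F : ℂ → ℝ → ℂ}
    (hF : ∀ q : ℝ, 0 < q → DifferentiableOn ℂ (fun z => F z q) {(1 : ℂ)}ᶜ)
    (hFeq : ∀ z : ℂ, 1 < z.re → ∀ q : ℝ, 0 < q → F z q = hzSeries z q) (n : ℕ) :
    hzCont F (1 - n) := by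
  induction n with
  | zero => simpa using hzCont_base hFeq
  | succ n ih =>
    have := hzCont_step hF hFeq (by linarith [n.cast_nonneg (α := ℝ)]) ih
    convert this using 1
    push_cast; ring

lemma bernoulliPoly_hasDerivAt (n : ℕ) (x : ℝ) :
    HasDerivAt (bernoulliPoly (n + 1)) ((n + 1) * bernoulliPoly n x) x := by
  have h := ((Polynomial.bernoulli (n + 1)).map (algebraMap ℚ ℝ)).hasDerivAt x
  rw [Polynomial.derivative_map, Polynomial.derivative_bernoulli_add_one] at h
  have e : bernoulliPoly (n + 1) = fun x : ℝ =>
      ((Polynomial.bernoulli (n + 1)).map (algebraMap ℚ ℝ)).eval x := rfl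
  rw [e]
  simpa [bernoulliPoly] using h

lemma hzH_value {F : ℂ → ℝ → ℂ}
    (hF : ∀ q : ℝ, 0 < q → DifferentiableOn ℂ (fun z => F z q) {(1 : ℂ)}ᶜ)
    (hFeq : ∀ z : ℂ, 1 < z.re → ∀ q : ℝ, 0 < q → F z q = hzSeries z q) (n : ℕ) :
    ∀ u : ℝ, hzH F (1 - n) (Real.exp u) = (bernoulliPoly n (Real.exp u) : ℂ) := by
  induction n with
  | zero => intro u; simp [hzH, bernoulliPoly]
  | succ n ih =>
    intro u
    rw [hz_formula hF hFeq (a := 1 - (n + 1 : ℕ)) (by push_cast; linarith [n.cast_nonneg (α := ℝ)])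
      (hzCont_all hF hFeq (n + 1)) (by simp)]
    have e : (1 - ((n + 1 : ℕ) : ℂ) + 1) = 1 - (n : ℂ) := by push_cast; ring
    simp_rw [e, ih]
    have h1 : hzH F (1 - ((n + 1 : ℕ) : ℂ)) 1 = (bernoulliPoly (n + 1) 1 : ℂ) := by
      have hne : (-(n : ℂ)) ≠ 1 := by
        intro h
        have := congrArg Complex.re h
        simp at this
        linarith [n.cast_nonneg (α := ℝ)]
      have hn : (n : ℂ) + 1 ≠ 0 := by exact_mod_cast n.succ_ne_zero
      rw [show (1 - ((n + 1 : ℕ) : ℂ)) = -(n : ℂ) by push_cast; ring, hzH_of_ne F hne]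
      have : riemannZeta (-(n : ℂ)) = F (-(n : ℂ)) 1 := by
        refine hz_identity (f := riemannZeta) (g := fun z => F z 1)
          (fun w hw => (differentiableAt_riemannZeta hw).differentiableWithinAt)
          (hF 1 one_pos) ?_ hne
        intro w hw
        rw [hFeq w hw 1 one_pos, hzSeries, zeta_eq_tsum_one_div_nat_add_one_cpow hw]
        simp
      rw [← this, riemannZeta_neg_nat_eq_bernoulli']
      have hb : bernoulliPoly (n + 1) 1 = ((bernoulli' (n + 1) : ℚ) : ℝ) := by
        rw [bernoulliPoly, ← Polynomial.bernoulli_eval_one, Polynomial.eval_one_map]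
        rfl
      rw [hb]
      push_cast
      field_simp
      ring
    rw [h1]
    have hder : ∀ s ∈ uIcc 0 u, HasDerivAt (fun s : ℝ => (bernoulliPoly (n + 1) (Real.exp s) : ℂ))
        (((n : ℂ) + 1) * ((bernoulliPoly n (Real.exp s) : ℂ) * (Real.exp s : ℂ))) s := by
      intro s _
      have := ((bernoulliPoly_hasDerivAt n (Real.exp s)).comp s (Real.hasDerivAt_exp s)).ofReal_comp
      refine this.congr_deriv ?_
      push_cast; ring
    have hb : Continuous (bernoulliPoly n) :=
      ((Polynomial.bernoulli n).map (algebraMap ℚ ℝ)).continuous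
    have hi : Continuous (fun s : ℝ =>
        (((n : ℂ) + 1) * ((bernoulliPoly n (Real.exp s) : ℂ) * (Real.exp s : ℂ)))) := by
      have : Continuous (fun s : ℝ => bernoulliPoly n (Real.exp s)) := hb.comp Real.continuous_exp
      fun_prop
    have := intervalIntegral.integral_eq_sub_of_hasDerivAt hder (hi.intervalIntegrable _ _)
    rw [intervalIntegral.integral_const_mul, Real.exp_zero] at this
    rw [Nat.cast_add, Nat.cast_one]
    linear_combination this

lemma hz_deriv_deriv {F : ℂ → ℝ → ℂ}
    (hF : ∀ q : ℝ, 0 < q → DifferentiableOn ℂ (fun z => F z q) {(1 : ℂ)}ᶜ)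
    (hFeq : ∀ z : ℂ, 1 < z.re → ∀ q : ℝ, 0 < q → F z q = hzSeries z q) (j : ℕ)
    {q : ℝ} (hq : 0 < q) :
    HasDerivAt (fun t : ℝ => deriv (fun z => F z t) (-((j : ℂ) + 1)))
      (-F (-(j : ℂ)) q + ((j : ℂ) + 1) * deriv (fun z => F z q) (-(j : ℂ))) q := by
  have hj0 : (0 : ℝ) ≤ j := j.cast_nonneg
  have hne : ∀ x : ℝ, 0 ≤ x → (-(x : ℂ)) ≠ 1 := by
    intro x hx h
    have := congrArg Complex.re h
    simp at this
    linarith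
  have hne0 : (-(j : ℂ)) ≠ 1 := by simpa using hne j hj0
  have hne1 : (-((j : ℂ) + 1)) ≠ 1 := by simpa using hne (j + 1) (by linarith)
  set a : ℝ := 1 - ((j + 2 : ℕ) : ℝ) with ha
  have ha1 : a ≤ 1 := by rw [ha]; push_cast; linarith
  have hc : hzCont F a := hzCont_all hF hFeq (j + 2)
  have ho := hz_halfplane_open (a - 1)
  have hmem : (-((j : ℂ) + 1)) ∈ {z : ℂ | a - 1 < z.re} := by
    simp [ha]
  set f : ℂ → ℝ → ℂ := fun z s => hzH F (z + 1) (Real.exp s) * (Real.exp s : ℂ) with hf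
  have hfc := hz_shift_cont hc
  have hfd := fun s => (hz_shift_diff hF hFeq s).differentiableOn (s := {z : ℂ | a - 1 < z.re})
  set z0 : ℂ := -((j : ℂ) + 1) with hz0
  have hD : ∀ u : ℝ, deriv (fun z => F z (Real.exp u)) z0 =
      deriv (fun z => F z 1) z0 - ∫ s in (0 : ℝ)..u, deriv (fun z => f z s) z0 := by
    intro u
    have h1 : HasDerivAt (fun z => F z 1) (deriv (fun z => F z 1) z0) z0 :=
      ((hF 1 one_pos).differentiableAt (isOpen_compl_singleton.mem_nhds hne1)).hasDerivAt
    have h2 := h1.sub (hz_integral_deriv ho (f := f) hfc hfd hmem 0 u)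
    refine (h2.congr_of_eventuallyEq ?_).deriv
    filter_upwards [ho.mem_nhds hmem, isOpen_compl_singleton.mem_nhds hne1] with z hz hz1
    have h3 := hz_formula hF hFeq ha1 hc hz u
    rw [hzH_of_ne F hz1, hzH_of_ne F hz1] at h3
    have hz2 : z - 1 ≠ 0 := sub_ne_zero.2 hz1
    apply mul_left_cancel₀ hz2
    rw [h3]
    simp only [Pi.sub_apply, hf]
    ring
  have hcont := hz_deriv_cont ho (f := f) hfc hfd hmem
  have hu : ∀ u : ℝ, HasDerivAt (fun u : ℝ => deriv (fun z => F z (Real.exp u)) z0)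
      (-deriv (fun z => f z u) z0) u := by
    intro u
    have := (intervalIntegral.integral_hasDerivAt_right (hcont.intervalIntegrable 0 u)
      (hcont.stronglyMeasurableAtFilter _ _) hcont.continuousAt).const_sub (deriv (fun z => F z 1) z0)
    exact this.congr_of_eventuallyEq (Eventually.of_forall hD)
  have hval : deriv (fun z => f z (Real.log q)) z0 =
      (F (-(j : ℂ)) q - ((j : ℂ) + 1) * deriv (fun z => F z q) (-(j : ℂ))) * q := by
    have hw : z0 + 1 = -(j : ℂ) := by rw [hz0]; ring
    have h1 : HasDerivAt (fun z => F z q) (deriv (fun z => F z q) (-(j : ℂ))) (z0 + 1) := by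
      rw [hw]
      exact ((hF q hq).differentiableAt (isOpen_compl_singleton.mem_nhds hne0)).hasDerivAt
    have h2 := (((hasDerivAt_id z0).sub_const 0).mul (h1.comp_add_const z0 1)).mul_const (q : ℂ)
    refine ((h2.congr_of_eventuallyEq ?_).congr_deriv ?_).deriv
    · have : ∀ᶠ z in 𝓝 z0, z + 1 ≠ 1 := by
        have hcz : ContinuousAt (fun z : ℂ => z + 1) z0 := by fun_prop
        exact hcz.eventually_ne (by rw [hw]; exact hne0)
      filter_upwards [this] with z hz
      simp only [hf, Real.exp_log hq]
      rw [hzH_of_ne F hz]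
      simp
    · rw [hw, hz0]
      simp only [id]
      ring
  have hfin := (hu (Real.log q)).scomp q (Real.hasDerivAt_log hq.ne')
  rw [hval] at hfin
  have hq' : (q : ℂ) ≠ 0 := by exact_mod_cast hq.ne'
  refine (hfin.congr_of_eventuallyEq ?_).congr_deriv ?_
  · filter_upwards [lt_mem_nhds hq] with t ht
    simp [Real.exp_log ht]
  · rw [Complex.real_smul]
    push_cast
    field_simp
    ring

/-- For `k ≥ 2` and `q > 0`, `d/dq ψ^{(-k)}(q) = ψ^{(-k+1)}(q)`. -/
theorem balancedNegapolygamma_deriv (F : ℂ → ℝ → ℂ)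
    (hF : ∀ q : ℝ, 0 < q → AnalyticOn ℂ (fun z => F z q) {(1 : ℂ)}ᶜ)
    (hFeq : ∀ z : ℂ, 1 < z.re → ∀ q : ℝ, 0 < q →
      F z q = ∑' n : ℕ, 1 / ((n : ℂ) + (q : ℂ)) ^ z)
    (k : ℕ) (hk : 2 ≤ k) (q : ℝ) (hq : 0 < q) :
    HasDerivAt (fun t : ℝ => balancedNegapolygamma F k t)
      (balancedNegapolygamma F (k - 1) q) q := by
  obtain ⟨j, rfl⟩ := Nat.exists_eq_add_of_le' hk
  have hF' : ∀ q : ℝ, 0 < q → DifferentiableOn ℂ (fun z => F z q) {(1 : ℂ)}ᶜ :=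
    fun q hq => (hF q hq).differentiableOn
  have hFeq' : ∀ z : ℂ, 1 < z.re → ∀ q : ℝ, 0 < q → F z q = hzSeries z q := hFeq
  have h1 := hz_deriv_deriv hF' hFeq' j hq
  have h2 := (bernoulliPoly_hasDerivAt (j + 1) q).ofReal_comp
  have hj2 : (j : ℂ) + 2 ≠ 0 := by exact_mod_cast (j + 1).succ_ne_zero
  have hj1 : (j : ℂ) + 1 ≠ 0 := by exact_mod_cast j.succ_ne_zero
  have hv : ((j : ℂ) + 1) * F (-(j : ℂ)) q = -(bernoulliPoly (j + 1) q : ℂ) := by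
    have hne : (-(j : ℂ)) ≠ 1 := by
      intro h
      apply hj1
      linear_combination -h
    have := hzH_value hF' hFeq' (j + 1) (Real.log q)
    rw [Real.exp_log hq, show (1 - ((j + 1 : ℕ) : ℂ)) = -(j : ℂ) by push_cast; ring,
      hzH_of_ne F hne] at this
    linear_combination -this
  have h3 := ((h1.const_mul ((j : ℂ) + 2)).sub
    (h2.const_mul (harmonicNum (j + 1) : ℂ))).const_mul (1 / ((j + 2).factorial : ℂ))
  refine (h3.congr_of_eventuallyEq (Eventually.of_forall fun t => ?_)).congr_deriv ?_
  · simp only [balancedNegapolygamma, Pi.sub_apply]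
    rw [show (1 - ((j + 2 : ℕ) : ℂ)) = -((j : ℂ) + 1) by push_cast; ring,
      show j + 2 - 1 = j + 1 from rfl]
    push_cast
    rfl
  · rw [show j + 2 - 1 = j + 1 from rfl, balancedNegapolygamma, show j + 1 - 1 = j from rfl,
      show (1 - ((j + 1 : ℕ) : ℂ)) = -(j : ℂ) by push_cast; ring]
    have hh : harmonicNum (j + 1) = harmonicNum j + 1 / ((j : ℝ) + 1) := by
      simp [harmonicNum, Finset.sum_range_succ]
    have hf : ((j + 1).factorial : ℂ) ≠ 0 := by exact_mod_cast (j + 1).factorial_ne_zero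
    have hFv : F (-(j : ℂ)) q = -(bernoulliPoly (j + 1) q : ℂ) / ((j : ℂ) + 1) := by
      rw [← hv]; field_simp
    rw [hh, Nat.factorial_succ (j + 1), hFv]
    push_cast
    have hj2' : (j : ℂ) + 1 + 1 ≠ 0 := by convert hj2 using 1; ring
    field_simp
    ring
end

section
/- For n ∈ ℕ, ∫₀¹ qⁿ ln(sin πq) dq = -ln 2/(n+1) + n! ∑_{k=1}^{⌊n/2⌋} (-1)^k ζ(2k+1) / ((2π)^{2k} (n+1-2k)!). -/
open Real Complex

lemma X_eq (r q : ℝ) : Complex.normSq (1 - (r:ℂ) * Complex.exp ((2 * π * q : ℝ) * Complex.I)) =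
    (1 - r)^2 + 4 * r * Real.sin (π * q)^2 := by
  rw [Complex.exp_mul_I, ← Complex.ofReal_cos, ← Complex.ofReal_sin, Complex.normSq_apply]
  simp only [Complex.sub_re, Complex.sub_im, Complex.one_re, Complex.one_im, Complex.mul_re,
    Complex.mul_im, Complex.ofReal_re, Complex.ofReal_im, Complex.add_re, Complex.add_im,
    Complex.I_re, Complex.I_im]
  have h1 : 2 * π * q = 2 * (π * q) := by ring
  rw [h1, Real.cos_two_mul, Real.sin_two_mul]
  have := Real.sin_sq_add_cos_sq (π * q)
  have h2 : Real.cos (π * q)^2 = 1 - Real.sin (π * q)^2 := by linarith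
  ring_nf
  have h4 : Real.cos (π * q)^4 = (1 - Real.sin (π * q)^2)^2 := by rw [← h2]; ring
  rw [h4, h2]
  ring

noncomputable def G (r q : ℝ) : ℝ := Real.log ((1 - r)^2 + 4 * r * Real.sin (π * q)^2) / 2

lemma G_sum (r q : ℝ) (h0 : 0 ≤ r) (h1 : r < 1) :
    HasSum (fun m : ℕ => r^m / m * Real.cos (2 * π * m * q)) (- G r q) := by
  set z : ℂ := (r:ℂ) * Complex.exp ((2 * π * q : ℝ) * Complex.I) with hz
  have hn : ‖z‖ < 1 := by
    rw [hz, norm_mul, Complex.norm_exp_ofReal_mul_I]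
    simpa [abs_of_nonneg h0] using h1
  have := Complex.hasSum_re (Complex.hasSum_taylorSeries_neg_log hn)
  have e : (-Complex.log (1 - z)).re = - G r q := by
    rw [Complex.neg_re, Complex.log_re, G, ← X_eq, ← hz, Complex.normSq_eq_norm_sq, Real.log_pow]
    push_cast; ring
  rw [e] at this
  convert this using 2 with m
  have : z ^ m / m = ((r^m / m : ℝ) : ℂ) * Complex.exp ((2 * π * m * q : ℝ) * Complex.I) := by
    rw [hz, mul_pow, ← Complex.exp_nat_mul]
    push_cast
    rw [show (m:ℂ) * (2 * π * q * Complex.I) = 2 * π * m * q * Complex.I by ring]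
    ring
  rw [this, Complex.re_ofReal_mul, Complex.exp_ofReal_mul_I_re]

noncomputable def cc (n m : ℕ) : ℝ := ∫ q in (0:ℝ)..1, q^n * Real.cos (2 * π * m * q)

lemma cc_rec (n m : ℕ) (hm : m ≠ 0) :
    cc (n+2) m = (n+2) / (2*π*m)^2 - (n+2)*(n+1)/(2*π*m)^2 * cc n m := by
  set a : ℝ := 2 * π * m with ha
  have ha0 : a ≠ 0 := by positivity
  have hc : Real.cos a = 1 := by
    rw [ha, show 2 * π * m = m * (2 * π) by ring]; exact Real.cos_nat_mul_two_pi m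
  have hs : Real.sin a = 0 := by
    rw [ha, show 2 * π * m = (2 * m : ℕ) * π by push_cast; ring]; exact Real.sin_nat_mul_pi _
  have key : ∫ q in (0:ℝ)..1, (q^(n+2) * Real.cos (a*q) + (n+2)*(n+1)/a^2 * (q^n * Real.cos (a * q)))
      = (n+2)/a^2 := by
    rw [intervalIntegral.integral_eq_sub_of_hasDerivAt
      (f := fun q => q^(n+2) * (Real.sin (a*q) / a) + (n+2) * q^(n+1) * (Real.cos (a*q) / a^2))]
    · simp [hc, hs]; ring
    · intro x _
      have h1 : HasDerivAt (fun x => a * x) a x := by simpa using (hasDerivAt_id x).const_mul a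
      have h2 := (hasDerivAt_pow (n+2) x).mul (h1.sin.div_const a)
      have h3 := ((hasDerivAt_pow (n+1) x).const_mul ((n:ℝ)+2)).mul (h1.cos.div_const (a^2))
      refine (h2.add h3).congr_deriv ?_
      simp only [Nat.add_sub_cancel, show n + 2 - 1 = n + 1 by omega]
      push_cast
      field_simp
      ring
    · apply Continuous.intervalIntegrable; fun_prop
  rw [intervalIntegral.integral_add, intervalIntegral.integral_const_mul] at key
  · unfold cc
    simp only [← ha]
    linarith
  · apply Continuous.intervalIntegrable; fun_prop
  · apply Continuous.intervalIntegrable; fun_prop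

lemma cc_zero (m : ℕ) (hm : m ≠ 0) : cc 0 m = 0 := by
  unfold cc
  have ha0 : 2 * π * m ≠ 0 := by positivity
  have hs : Real.sin (2 * π * m) = 0 := by
    rw [show 2 * π * m = (2 * m : ℕ) * π by push_cast; ring]; exact Real.sin_nat_mul_pi _
  simp [intervalIntegral.integral_comp_mul_left (f := Real.cos) ha0, hs]

lemma cc_one (m : ℕ) (hm : m ≠ 0) : cc 1 m = 0 := by
  unfold cc
  set a : ℝ := 2 * π * m with ha
  have ha0 : a ≠ 0 := by positivity
  have hc : Real.cos a = 1 := by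
    rw [ha, show 2 * π * m = m * (2 * π) by ring]; exact Real.cos_nat_mul_two_pi m
  have hs : Real.sin a = 0 := by
    rw [ha, show 2 * π * m = (2 * m : ℕ) * π by push_cast; ring]; exact Real.sin_nat_mul_pi _
  rw [intervalIntegral.integral_eq_sub_of_hasDerivAt
      (f := fun q => q * (Real.sin (a*q) / a) + (Real.cos (a*q) / a^2))]
  · simp [hc, hs]
  · intro x _
    have h1 : HasDerivAt (fun x => a * x) a x := by simpa using (hasDerivAt_id x).const_mul a
    have h2 := (hasDerivAt_id x).mul (h1.sin.div_const a)
    refine (h2.add (h1.cos.div_const (a^2))).congr_deriv ?_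
    simp only [id]
    field_simp
    ring
  · apply Continuous.intervalIntegrable; fun_prop

lemma cc_eq (n m : ℕ) (hm : m ≠ 0) : cc n m =
    n.factorial * ∑ j ∈ Finset.range (n / 2),
      (-1:ℝ)^j / ((2*π*m)^(2*j+2) * ((n-1-2*j).factorial : ℝ)) := by
  induction n using Nat.strong_induction_on with
  | _ n ih =>
    match n with
    | 0 => simp [cc_zero m hm]
    | 1 => simp [cc_one m hm]
    | n+2 =>
      rw [cc_rec n m hm, ih n (by omega)]
      have ha0 : 2 * π * m ≠ 0 := by positivity
      set a : ℝ := 2 * π * m with ha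
      rw [show (n+2)/2 = n/2+1 by omega, Finset.sum_range_succ', mul_add (_ : ℝ) (Finset.sum _ _), Finset.mul_sum,
        Finset.mul_sum, Finset.mul_sum, sub_eq_neg_add, ← Finset.sum_neg_distrib]
      congr 1
      · apply Finset.sum_congr rfl
        intro j _
        rw [show n + 2 - 1 - 2 * (j+1) = n - 1 - 2 * j by omega, Nat.factorial_succ,
          Nat.factorial_succ]
        have := Nat.factorial_ne_zero (n-1-2*j)
        push_cast
        field_simp
        ring
      · simp only [mul_zero, Nat.sub_zero, zero_add, pow_zero, show n + 2 - 1 = n + 1 by omega]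
        rw [Nat.factorial_succ (n+1)]
        have := Nat.factorial_ne_zero (n+1)
        push_cast
        field_simp
        ring

lemma G_bound (r q : ℝ) (h0 : 1/4 ≤ r) (h1 : r ≤ 1) (hs : 0 < Real.sin (π * q)) :
    |G r q| ≤ Real.log 2 + |Real.log (Real.sin (π * q))| := by
  have hs1 := Real.sin_le_one (π * q)
  have hsq : Real.sin (π * q)^2 ≤ 1 := by nlinarith
  set s := Real.sin (π * q)
  have l1 : s^2 ≤ (1 - r)^2 + 4 * r * s^2 := by nlinarith [sq_nonneg (1-r), sq_nonneg s]
  have l2 : (1 - r)^2 + 4 * r * s^2 ≤ 2^2 := by nlinarith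
  have hX : 0 < s^2 := by positivity
  have g1 := Real.log_le_log hX l1
  have g2 := Real.log_le_log (hX.trans_le l1) l2
  rw [Real.log_pow] at g1 g2
  have := Real.log_pos (show (1:ℝ) < 2 by norm_num)
  unfold G
  push_cast at g1 g2
  rw [abs_le]
  constructor
  · linarith [neg_abs_le (Real.log s)]
  · linarith [abs_nonneg (Real.log s)]

open MeasureTheory Filter Topology

lemma int_sum (n : ℕ) (r : ℝ) (h0 : 0 ≤ r) (h1 : r < 1) :
    HasSum (fun m : ℕ => r^m * (cc n m / m)) (∫ q in (0:ℝ)..1, q^n * (- G r q)) := by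
  have := intervalIntegral.hasSum_integral_of_dominated_convergence (μ := volume) (a := 0) (b := 1)
    (F := fun (m : ℕ) (q : ℝ) => q^n * (r^m / m * Real.cos (2 * π * m * q)))
    (f := fun q => q^n * (- G r q)) (fun m _ => r^m) ?_ ?_ ?_ ?_ ?_
  · refine Eq.mp (congrArg (fun f => HasSum f _) (funext fun m => ?_)) this
    symm
    unfold cc
    rw [div_eq_mul_inv, mul_comm (intervalIntegral _ _ _ _), ← mul_assoc,
      ← intervalIntegral.integral_const_mul]
    congr 1
    ext q
    ring
  · intro m
    apply Continuous.aestronglyMeasurable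
    fun_prop
  · intro m
    refine Eventually.of_forall fun t ht => ?_
    rw [Set.uIoc_of_le zero_le_one] at ht
    rw [norm_mul, norm_mul, norm_pow, Real.norm_eq_abs, abs_of_pos ht.1]
    have e1 : t^n ≤ 1 := pow_le_one₀ ht.1.le ht.2
    have e2 : ‖r^m / (m:ℝ)‖ ≤ r^m := by
      rw [Real.norm_of_nonneg (by positivity)]
      rcases Nat.eq_zero_or_pos m with rfl | hm
      · simp
      · exact div_le_self (by positivity) (by exact_mod_cast hm)
    have e3 : ‖Real.cos (2 * π * m * t)‖ ≤ 1 := Real.abs_cos_le_one _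
    calc _ ≤ 1 * (r^m * 1) := by gcongr
      _ = r^m := by ring
  · exact Eventually.of_forall fun t _ => summable_geometric_of_lt_one h0 h1
  · exact intervalIntegrable_const
  · exact Eventually.of_forall fun t _ => (G_sum r t h0 h1).mul_left _

lemma log_int : IntervalIntegrable (fun q => Real.log (Real.sin (π * q))) volume 0 1 := by
  have := (intervalIntegrable_log_sin (a := 0) (b := π)).comp_mul_left (c := π)
  simpa [Function.comp_def, Real.pi_ne_zero] using this

lemma sin_pos_ae : ∀ᵐ q : ℝ, q ∈ Set.uIoc (0:ℝ) 1 → 0 < Real.sin (π * q) := by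
  have : ∀ᵐ q : ℝ, q ≠ 1 := by simp [ae_iff]
  filter_upwards [this] with q hq h
  rw [Set.uIoc_of_le zero_le_one] at h
  have hq1 : q < 1 := lt_of_le_of_ne h.2 hq
  apply Real.sin_pos_of_pos_of_lt_pi
  · have := h.1; positivity
  · nlinarith [Real.pi_pos]

lemma int_lim (n : ℕ) : Tendsto (fun r => ∫ q in (0:ℝ)..1, q^n * (- G r q)) (𝓝[<] 1)
    (𝓝 (∫ q in (0:ℝ)..1, q^n * (- G 1 q))) := by
  apply intervalIntegral.tendsto_integral_filter_of_dominated_convergence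
    (fun q => Real.log 2 + |Real.log (Real.sin (π * q))|)
  · refine Eventually.of_forall fun r => ?_
    apply Measurable.aestronglyMeasurable
    unfold G
    fun_prop
  · filter_upwards [Ioo_mem_nhdsLT (show (1/4:ℝ) < 1 by norm_num)] with r hr
    filter_upwards [sin_pos_ae] with q hq h
    have hs := hq h
    rw [Set.uIoc_of_le zero_le_one] at h
    have e1 : q^n ≤ 1 := pow_le_one₀ h.1.le h.2
    rw [norm_mul, norm_pow, norm_neg, Real.norm_eq_abs, abs_of_pos h.1, Real.norm_eq_abs]
    calc _ ≤ 1 * |G r q| := by gcongr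
      _ ≤ _ := by rw [one_mul]; exact G_bound r q hr.1.le hr.2.le hs
  · exact intervalIntegrable_const.add log_int.abs
  · filter_upwards [sin_pos_ae] with q hq h
    have hs := hq h
    apply Tendsto.mono_left _ nhdsWithin_le_nhds
    have : ContinuousAt (fun r => q^n * (- G r q)) 1 := by
      unfold G
      have : (1 - (1:ℝ))^2 + 4 * 1 * Real.sin (π * q)^2 ≠ 0 := by
        simp [hs.ne']
      fun_prop (disch := assumption)
    exact this

lemma G_one (n : ℕ) : ∫ q in (0:ℝ)..1, q^n * (- G 1 q) =
    - (Real.log 2 / (n+1) + ∫ q in (0:ℝ)..1, q^n * Real.log (Real.sin (π * q))) := by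
  have h : ∫ q in (0:ℝ)..1, q^n * (- G 1 q) =
      ∫ q in (0:ℝ)..1, -(Real.log 2 * q^n + q^n * Real.log (Real.sin (π * q))) := by
    apply intervalIntegral.integral_congr_ae
    filter_upwards [sin_pos_ae] with q hq h
    have hs := hq h
    unfold G
    rw [show (1 - (1:ℝ))^2 + 4 * 1 * Real.sin (π * q)^2 = (2 * Real.sin (π * q))^2 by ring,
      Real.log_pow, Real.log_mul two_ne_zero hs.ne']
    push_cast
    ring
  rw [h, intervalIntegral.integral_neg, intervalIntegral.integral_add,
    intervalIntegral.integral_const_mul, integral_pow]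
  · simp; ring
  · apply Continuous.intervalIntegrable; fun_prop
  · exact log_int.continuousOn_mul (by fun_prop)

lemma cc_hasSum (n : ℕ) : HasSum (fun m : ℕ => cc n m / m)
    (n.factorial * ∑ j ∈ Finset.range (n / 2),
      (-1:ℝ)^j / ((2*π)^(2*j+2) * ((n-1-2*j).factorial : ℝ)) * ∑' m : ℕ, 1 / (m:ℝ)^(2*j+3)) := by
  have : (fun m : ℕ => cc n m / m) = fun m : ℕ => (n.factorial:ℝ) * ∑ j ∈ Finset.range (n / 2),
      (-1:ℝ)^j / ((2*π)^(2*j+2) * ((n-1-2*j).factorial : ℝ)) * (1 / (m:ℝ)^(2*j+3)) := by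
    ext m
    rcases eq_or_ne m 0 with rfl | hm
    · simp
    · rw [cc_eq n m hm, mul_div_assoc, Finset.sum_div]
      congr 1
      apply Finset.sum_congr rfl
      intro j _
      have := Nat.factorial_ne_zero (n-1-2*j)
      field_simp
      ring
  rw [this]
  apply HasSum.mul_left
  apply hasSum_sum
  intro j _
  apply HasSum.mul_left
  exact (Real.summable_one_div_nat_pow.2 (by omega)).hasSum

lemma main_real (n : ℕ) : ∫ q in (0:ℝ)..1, q^n * Real.log (Real.sin (π * q)) =
    - Real.log 2 / (n+1) - n.factorial * ∑ j ∈ Finset.range (n / 2),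
      (-1:ℝ)^j / ((2*π)^(2*j+2) * ((n-1-2*j).factorial : ℝ)) * ∑' m : ℕ, 1 / (m:ℝ)^(2*j+3) := by
  have hS := cc_hasSum n
  have t1 : Tendsto (fun r : ℝ => ∑' m : ℕ, r^m * (cc n m / m)) (𝓝[<] 1)
      (𝓝 (∑' m : ℕ, cc n m / m)) := by
    apply tendsto_tsum_of_dominated_convergence hS.summable.abs
    · intro m
      apply Tendsto.mono_left _ nhdsWithin_le_nhds
      have : ContinuousAt (fun r : ℝ => r^m * (cc n m / m)) 1 := by fun_prop
      simpa [ContinuousAt] using this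
    · filter_upwards [Ioo_mem_nhdsLT (show (0:ℝ) < 1 by norm_num)] with r hr m
      rw [norm_mul, norm_pow, Real.norm_eq_abs, abs_of_pos hr.1, Real.norm_eq_abs]
      exact mul_le_of_le_one_left (abs_nonneg _) (pow_le_one₀ hr.1.le hr.2.le)
  have t2 := (int_lim n).congr' (f₂ := fun r : ℝ => ∑' m : ℕ, r^m * (cc n m / m)) (by
    filter_upwards [Ioo_mem_nhdsLT (show (0:ℝ) < 1 by norm_num)] with r hr
    exact (int_sum n r hr.1.le hr.2).tsum_eq.symm)
  have := tendsto_nhds_unique t1 t2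
  rw [hS.tsum_eq, G_one] at this
  rw [this]
  ring

theorem integral_pow_log_sin (n : ℕ) :
    ((∫ q in (0 : ℝ)..1, q ^ n * Real.log (Real.sin (π * q))) : ℂ) =
      -(Real.log 2 : ℂ) / (n + 1) +
        (n.factorial : ℂ) * ∑ k ∈ Finset.Icc 1 (n / 2),
          (-1 : ℂ) ^ k * riemannZeta (2 * k + 1) /
            ((2 * (π : ℂ)) ^ (2 * k) * ((n + 1 - 2 * k).factorial : ℂ)) := by
  have h := congrArg (fun x : ℝ => (x : ℂ)) (main_real n)
  simp only [← intervalIntegral.integral_ofReal] at h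
  push_cast at h
  rw [h, sub_eq_add_neg, ← mul_neg, ← Finset.sum_neg_distrib, ← Finset.Ico_add_one_right_eq_Icc,
    Finset.sum_Ico_eq_sum_range]
  congr 2
  apply Finset.sum_congr (by simp)
  intro j _
  have hz := zeta_nat_eq_tsum_of_gt_one (k := 2*j+3) (by omega)
  rw [← hz, show n + 1 - 2 * (1 + j) = n - 1 - 2 * j by omega]
  push_cast
  rw [show (2:ℂ) * (1 + j) + 1 = 2 * j + 3 by ring]
  ring
end

section
/- For real z, z' ≤ 0 with z + z' < 1 (and z, z' not making the expression singular), ∫₀¹ ζ(z',q) ζ(z,q) dq = (2 Γ(1-z) Γ(1-z') / (2π)^{2-z-z'}) ζ(2-z-z') cos(π(z-z')/2). -/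
open Real Complex
open HurwitzZeta Set

lemma interp_bound (n : ℕ) (q : ℝ) (hq : q ∈ Icc (0:ℝ) 1) (s : ℂ) (hs : -(1/2) < s.re)
    (hs4 : ‖s‖ < 4) :
    ‖1 / (((n+1:ℕ):ℂ) + q) ^ s - (1 - q) * (1 / ((n:ℂ) + (1:ℝ)) ^ s) -
      q * (1 / (((n+1:ℕ):ℂ) + (1:ℝ)) ^ s)‖ ≤ 60 * ((n+1:ℕ):ℝ) ^ (-(3/2) : ℝ) := by
  set m : ℝ := ((n+1:ℕ):ℝ) with hm
  have hm1 : 1 ≤ m := by rw [hm]; push_cast; linarith [Nat.cast_nonneg (α := ℝ) n]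
  have hd (r : ℂ) (x : ℝ) (hx : 0 ≤ x) :
      HasDerivAt (fun y : ℝ => ((m + y : ℝ) : ℂ) ^ r) (r * ((m + x : ℝ) : ℂ) ^ (r - 1)) x := by
    have h1 : HasDerivAt (fun y : ℂ => ((m:ℂ) + y) ^ r) (r * ((m:ℂ) + (x:ℂ)) ^ (r - 1) * 1) (x:ℂ) := by
      refine HasDerivAt.cpow_const ((hasDerivAt_id _).const_add _) ?_
      left
      simp; linarith
    simpa using h1.comp_ofReal
  have hn (r : ℂ) (hr : r.re ≤ -(3/2)) (x : ℝ) (hx : 0 ≤ x) :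
      ‖((m + x : ℝ) : ℂ) ^ r‖ ≤ m ^ (-(3/2) : ℝ) := by
    rw [Complex.norm_cpow_eq_rpow_re_of_pos (by linarith)]
    calc (m + x) ^ r.re ≤ (m + x) ^ (-(3/2) : ℝ) := Real.rpow_le_rpow_of_exponent_le (by linarith) hr
      _ ≤ _ := Real.rpow_le_rpow_of_nonpos (by linarith) (by linarith) (by norm_num)
  set B : ℝ := m ^ (-(3/2) : ℝ) with hB
  have hB0 : 0 ≤ B := by positivity
  have hs5 : ‖-s - 1‖ ≤ 5 := by
    calc ‖-s-1‖ ≤ ‖-s‖ + ‖(1:ℂ)‖ := norm_sub_le _ _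
      _ ≤ 5 := by simp; linarith
  have h1 (x : ℝ) (hx : x ∈ Icc (0:ℝ) 1) :
      ‖((m + x : ℝ) : ℂ) ^ (-s-1) - ((m + 0 : ℝ) : ℂ) ^ (-s-1)‖ ≤ 5 * B := by
    have := Convex.norm_image_sub_le_of_norm_hasDerivWithin_le (𝕜 := ℝ) (C := 5 * B) (s := Icc (0:ℝ) 1)
      (f := fun y : ℝ => ((m + y : ℝ) : ℂ) ^ (-s-1)) (x := 0) (y := x)
      (fun y hy => (hd (-s-1) y hy.1).hasDerivWithinAt) ?_ (convex_Icc 0 1) (by simp) hx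
    · refine this.trans ?_
      have : ‖x - 0‖ ≤ 1 := by rw [sub_zero, Real.norm_eq_abs, abs_of_nonneg hx.1]; exact hx.2
      nlinarith
    · intro y hy
      rw [norm_mul]
      have := hn (-s-1-1) (by simp; linarith) y hy.1
      gcongr
  have h2 (x : ℝ) (hx : x ∈ Icc (0:ℝ) 1) (x' : ℝ) (hx' : x' ∈ Icc (0:ℝ) 1) :
      ‖(((m + x : ℝ) : ℂ) ^ (-s) - x * (-s * ((m + 0 : ℝ) : ℂ) ^ (-s-1))) -
       (((m + x' : ℝ) : ℂ) ^ (-s) - x' * (-s * ((m + 0 : ℝ) : ℂ) ^ (-s-1)))‖ ≤ 20 * B := by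
    have := Convex.norm_image_sub_le_of_norm_hasDerivWithin_le (𝕜 := ℝ) (C := 20 * B) (s := Icc (0:ℝ) 1)
      (f := fun y : ℝ => ((m + y : ℝ) : ℂ) ^ (-s) - y * (-s * ((m + 0 : ℝ) : ℂ) ^ (-s-1))) (x := x') (y := x)
      (fun y hy => ((hd (-s) y hy.1).sub
        (((hasDerivAt_id y).ofReal_comp).mul_const _)).hasDerivWithinAt) ?_ (convex_Icc 0 1) hx' hx
    · refine this.trans ?_
      have : ‖x - x'‖ ≤ 1 := by
        rw [Real.norm_eq_abs, abs_le]; constructor <;> linarith [hx.1, hx.2, hx'.1, hx'.2]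
      nlinarith
    · intro y hy
      have e : -s * ((m + y : ℝ) : ℂ) ^ (-s-1) - ((1:ℝ):ℂ) * (-s * ((m + 0 : ℝ) : ℂ) ^ (-s-1)) =
        -s * (((m + y : ℝ) : ℂ) ^ (-s-1) - ((m + 0 : ℝ) : ℂ) ^ (-s-1)) := by push_cast; ring
      rw [e, norm_mul, norm_neg]
      have := h1 y hy
      calc _ ≤ 4 * (5 * B) := by gcongr
        _ = _ := by ring
  have e1 : (((n+1:ℕ):ℂ) + q) = ((m + q : ℝ):ℂ) := by rw [hm]; push_cast; ring
  have e2 : ((n:ℂ) + (1:ℝ)) = ((m + 0 : ℝ):ℂ) := by rw [hm]; push_cast; ring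
  have e3 : (((n+1:ℕ):ℂ) + (1:ℝ)) = ((m + 1 : ℝ):ℂ) := by rw [hm]; push_cast; ring
  rw [e1, e2, e3]
  simp only [one_div, ← Complex.cpow_neg]
  have ha := h2 q hq 0 (by simp)
  have hb := h2 1 (by simp) q hq
  set A := (((m + q : ℝ) : ℂ) ^ (-s) - q * (-s * ((m + 0 : ℝ) : ℂ) ^ (-s-1))) -
       (((m + 0 : ℝ) : ℂ) ^ (-s) - (0:ℝ) * (-s * ((m + 0 : ℝ) : ℂ) ^ (-s-1))) with hA
  set A' := (((m + 1 : ℝ) : ℂ) ^ (-s) - (1:ℝ) * (-s * ((m + 0 : ℝ) : ℂ) ^ (-s-1))) -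
       (((m + q : ℝ) : ℂ) ^ (-s) - q * (-s * ((m + 0 : ℝ) : ℂ) ^ (-s-1))) with hA'
  have : ((m + q : ℝ) : ℂ) ^ (-s) - (1 - q) * ((m + 0 : ℝ) : ℂ) ^ (-s) - q * ((m + 1 : ℝ) : ℂ) ^ (-s)
     = ((1 - q : ℝ) : ℂ) * A - (q:ℂ) * A' := by
    rw [hA, hA']; push_cast; ring
  rw [this]
  calc _ ≤ ‖((1 - q : ℝ) : ℂ) * A‖ + ‖(q:ℂ) * A'‖ := norm_sub_le _ _
    _ = (1-q) * ‖A‖ + q * ‖A'‖ := by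
      rw [norm_mul, norm_mul, Complex.norm_of_nonneg (by linarith [hq.2]), Complex.norm_of_nonneg hq.1]
    _ ≤ 60 * B := by nlinarith [hq.1, hq.2]

lemma hurwitzZeta_at_zero (q : ℝ) (hq : q ∈ Ioo (0:ℝ) 1) :
    hurwitzZeta (q : UnitAddCircle) 0 = 1/2 - q := by
  have hqI : q ∈ Icc (0:ℝ) 1 := ⟨hq.1.le, hq.2.le⟩
  have hq0 : (q:ℂ) ≠ 0 := by exact_mod_cast hq.1.ne'
  let g : ℕ → ℂ → ℂ := fun n s => 1 / (((n+1:ℕ):ℂ) + q) ^ s - (1 - q) * (1 / ((n:ℂ) + (1:ℝ)) ^ s) -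
      q * (1 / (((n+1:ℕ):ℂ) + (1:ℝ)) ^ s)
  let U : Set ℂ := {s | -(1/2) < s.re} ∩ Metric.ball 0 4
  have hUo : IsOpen U := (isOpen_lt continuous_const Complex.continuous_re).inter Metric.isOpen_ball
  have hUc : IsPreconnected U :=
    ((convex_halfSpace_re_gt _).inter (convex_ball _ _)).isPreconnected
  have hdp (x : ℝ) (hx : 0 < x) : Differentiable ℂ (fun s : ℂ => 1 / (x:ℂ) ^ s) := by
    have hx0 : (x:ℂ) ≠ 0 := by exact_mod_cast hx.ne'
    intro s
    refine (differentiableAt_const _).div (differentiableAt_id.const_cpow (Or.inl hx0)) ?_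
    simp [Complex.cpow_eq_zero_iff, hx0]
  have hgd (n : ℕ) : Differentiable ℂ (g n) := by
    have a1 := hdp ((n+1:ℕ) + q) (by have := hq.1; positivity)
    have a2 := hdp (n + 1) (by positivity)
    have a3 := hdp ((n+1:ℕ) + 1) (by positivity)
    push_cast at a1 a2 a3
    simp only [g]
    push_cast
    exact (a1.sub (a2.const_mul _)).sub (a3.const_mul _)
  have hsum : Summable (fun n : ℕ => 60 * ((n+1:ℕ):ℝ) ^ (-(3/2) : ℝ)) :=
    ((summable_nat_add_iff 1).2 (Real.summable_nat_rpow.2 (by norm_num))).mul_left 60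
  have hR : DifferentiableOn ℂ (fun s => ∑' n, g n s) U :=
    Complex.differentiableOn_tsum_of_summable_norm hsum (fun n => (hgd n).differentiableOn) hUo
      (fun n s hs => interp_bound n q hqI s hs.1 (by simpa using hs.2))
  have hL : Differentiable ℂ (fun s => hurwitzZeta (q : UnitAddCircle) s -
      hurwitzZeta ((1:ℝ) : UnitAddCircle) s - 1 / (q:ℂ) ^ s + q) :=
    (((differentiable_hurwitzZeta_sub_hurwitzZeta _ _).sub (hdp q hq.1)).add_const _)
  have key : EqOn (fun s => hurwitzZeta (q : UnitAddCircle) s -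
      hurwitzZeta ((1:ℝ) : UnitAddCircle) s - 1 / (q:ℂ) ^ s + q) (fun s => ∑' n, g n s) U := by
    refine AnalyticOnNhd.eqOn_of_preconnected_of_eventuallyEq
      (hL.differentiableOn.analyticOnNhd hUo) (hR.analyticOnNhd hUo) hUc (z₀ := 2) ?_ ?_
    · constructor
      · simp; norm_num
      · simp; norm_num
    · filter_upwards [(isOpen_lt continuous_const Complex.continuous_re).mem_nhds
        (show (1:ℝ) < (2:ℂ).re by simp)] with s hs
      have b1 := hasSum_hurwitzZeta_of_one_lt_re hqI hs
      have b2 := hasSum_hurwitzZeta_of_one_lt_re (a := 1) (by simp) hs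
      have c1 := (hasSum_nat_add_iff' 1).2 b1
      have c2 := (hasSum_nat_add_iff' 1).2 b2
      have := ((c1.sub (b2.mul_left (1 - q : ℂ))).sub (c2.mul_left (q:ℂ))).tsum_eq
      simp only [g]
      rw [this]
      simp
      ring
  have h0 := key (show (0:ℂ) ∈ U by constructor <;> simp)
  have hg0 : ∀ n, g n 0 = 0 := by intro n; simp [g]
  simp only [hg0, tsum_zero, Complex.cpow_zero] at h0
  have : ((1:ℝ) : UnitAddCircle) = 0 := AddCircle.coe_period 1
  rw [this, hurwitzZeta_zero, riemannZeta_zero] at h0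
  linear_combination h0

lemma int_exp (c : ℂ) (hc : c ≠ 0) (h1 : cexp c = 1) : ∫ q in (0:ℝ)..1, cexp (c * q) = 0 := by
  rw [integral_exp_mul_complex hc]; simp [h1]

lemma exp_two_pi_int (k : ℤ) : cexp (2 * π * I * k) = 1 := by
  rw [mul_comm]; exact Complex.exp_int_mul_two_pi_mul_I k

lemma norm_term (ε : ℝ) (n : ℕ) (q : ℝ) : ‖cexp (2 * π * I * (ε * q : ℝ) * n)‖ = 1 := by
  have : 2 * π * I * (ε * q : ℝ) * n = ((2 * π * (ε * q) * n : ℝ) : ℂ) * I := by push_cast; ring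
  rw [this, Complex.norm_exp_ofReal_mul_I]

lemma cont_term (ε : ℝ) (n : ℕ) : Continuous (fun q : ℝ => cexp (2 * π * I * (ε * q : ℝ) * n)) := by
  fun_prop

lemma norm_nat_cpow (s : ℝ) (hs : 1 < s) (n : ℕ) : ‖(n:ℂ) ^ (s:ℂ)‖ = (n:ℝ) ^ s := by
  rcases Nat.eq_zero_or_pos n with rfl | h
  · have : (s:ℂ) ≠ 0 := by exact_mod_cast (by linarith : s ≠ 0)
    simp [Complex.zero_cpow this, Real.zero_rpow (by linarith : s ≠ 0)]
  · simpa using Complex.norm_natCast_cpow_of_pos h (s:ℂ)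

lemma cont_expZeta (ε s : ℝ) (hs : 1 < s) :
    Continuous (fun q : ℝ => expZeta ((ε * q : ℝ) : UnitAddCircle) (s:ℂ)) := by
  have : (fun q : ℝ => expZeta ((ε * q : ℝ) : UnitAddCircle) (s:ℂ)) =
      fun q => ∑' n : ℕ, cexp (2 * π * I * (ε * q : ℝ) * n) / (n:ℂ) ^ (s:ℂ) := by
    ext q
    exact (hasSum_expZeta_of_one_lt_re (ε * q) (by simpa using hs)).tsum_eq.symm
  rw [this]
  refine continuous_tsum (fun n => (cont_term ε n).div_const _) (Real.summable_one_div_nat_rpow.2 hs) ?_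
  intro n q
  rw [norm_div, norm_term, norm_nat_cpow s hs]

lemma hasSum_int (ε s : ℝ) (hs : 1 < s) (f : ℝ → ℂ) (hf : Continuous f) :
    HasSum (fun n : ℕ => (∫ q in (0:ℝ)..1, f q * cexp (2 * π * I * (ε * q : ℝ) * n)) / (n:ℂ) ^ (s:ℂ))
      (∫ q in (0:ℝ)..1, f q * expZeta ((ε * q : ℝ) : UnitAddCircle) (s:ℂ)) := by
  have := intervalIntegral.hasSum_integral_of_dominated_convergence (a := 0) (b := 1)
    (μ := MeasureTheory.volume)
    (F := fun (n : ℕ) (q : ℝ) => f q * (cexp (2 * π * I * (ε * q : ℝ) * n) / (n:ℂ) ^ (s:ℂ)))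
    (f := fun q => f q * expZeta ((ε * q : ℝ) : UnitAddCircle) (s:ℂ))
    (fun n q => ‖f q‖ * (1 / (n:ℝ) ^ s)) ?_ ?_ ?_ ?_ ?_
  · convert! this using 2 with n
    rw [← intervalIntegral.integral_div]
    congr 1; ext q; ring
  · intro n
    exact (hf.mul ((cont_term ε n).div_const _)).aestronglyMeasurable
  · intro n
    filter_upwards with q _
    rw [norm_mul, norm_div, norm_term, norm_nat_cpow s hs]
  · filter_upwards with q _
    exact (Real.summable_one_div_nat_rpow.2 hs).mul_left _
  · simp_rw [tsum_mul_left]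
    exact (hf.norm.mul continuous_const).intervalIntegrable _ _
  · filter_upwards with q _
    exact (hasSum_expZeta_of_one_lt_re (ε * q) (by simpa using hs)).mul_left _

/-- orthogonality -/
lemma orth (ε : ℝ) (hε : ε = 1 ∨ ε = -1) (s : ℝ) (hs : 1 < s) (m : ℕ) (hm : m ≠ 0) :
    ∫ q in (0:ℝ)..1, cexp (2 * π * I * (-ε * q : ℝ) * m) * expZeta ((ε * q : ℝ) : UnitAddCircle) (s:ℂ)
      = 1 / (m:ℂ) ^ (s:ℂ) := by
  refine (hasSum_int ε s hs _ (cont_term (-ε) m)).unique ?_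
  have hv : (∫ q in (0:ℝ)..1, cexp (2 * π * I * (-ε * q : ℝ) * m) * cexp (2 * π * I * (ε * q : ℝ) * m))
      / (m:ℂ) ^ (s:ℂ) = 1 / (m:ℂ) ^ (s:ℂ) := by
    rw [← intervalIntegral.integral_congr (f := fun _ => (1:ℂ))]
    · simp
    · intro q _
      simp only
      rw [← Complex.exp_add]
      symm
      convert Complex.exp_zero using 2
      push_cast; ring
  rw [← hv]
  apply hasSum_single (f := fun n : ℕ => (∫ q in (0:ℝ)..1, cexp (2 * π * I * (-ε * q : ℝ) * m) *
    cexp (2 * π * I * (ε * q : ℝ) * n)) / (n:ℂ) ^ (s:ℂ)) m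
  · intro n hn
    rw [div_eq_zero_iff]; left
    obtain ⟨e, he, he0⟩ : ∃ e : ℤ, (ε : ℂ) = e ∧ e ≠ 0 := by
      rcases hε with rfl | rfl
      · exact ⟨1, by simp, by simp⟩
      · exact ⟨-1, by simp, by simp⟩
    rw [← int_exp (2 * π * I * ((e * (n - m) : ℤ) : ℂ)) ?_ (exp_two_pi_int _)]
    · congr 1; ext q
      rw [← Complex.exp_add]
      congr 1
      push_cast
      rw [he]; ring
    · refine mul_ne_zero Complex.two_pi_I_ne_zero ?_
      have : (n:ℤ) - m ≠ 0 := by omega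
      exact_mod_cast mul_ne_zero he0 this

lemma orth' (ε : ℝ) (hε : ε = 1 ∨ ε = -1) (s : ℝ) (hs : 1 < s) (m : ℕ) (hm : m ≠ 0) :
    ∫ q in (0:ℝ)..1, cexp (2 * π * I * (ε * q : ℝ) * m) * expZeta ((ε * q : ℝ) : UnitAddCircle) (s:ℂ)
      = 0 := by
  refine (hasSum_int ε s hs _ (cont_term (ε) m)).unique ?_
  convert! hasSum_zero with n
  rcases Nat.eq_zero_or_pos n with rfl | h
  · have : (s:ℂ) ≠ 0 := by exact_mod_cast (by linarith : s ≠ 0)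
    simp [Complex.zero_cpow this]
  · rw [div_eq_zero_iff]; left
    obtain ⟨e, he, he0⟩ : ∃ e : ℤ, (ε : ℂ) = e ∧ e ≠ 0 := by
      rcases hε with rfl | rfl
      · exact ⟨1, by simp, by simp⟩
      · exact ⟨-1, by simp, by simp⟩
    rw [← int_exp (2 * π * I * ((e * (n + m) : ℤ) : ℂ)) ?_ (exp_two_pi_int _)]
    · congr 1; ext q
      rw [← Complex.exp_add]
      congr 1
      push_cast
      rw [he]; ring
    · refine mul_ne_zero Complex.two_pi_I_ne_zero ?_
      have : (n:ℤ) + m ≠ 0 := by omega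
      exact_mod_cast mul_ne_zero he0 this

/-- The constant `(2π)^(-s) Γ(s)`. -/
noncomputable def KK (s : ℝ) : ℂ := (2 * π : ℂ) ^ (-(s:ℂ)) * Complex.Gamma s

noncomputable def ff (s : ℝ) (q : ℝ) : ℂ :=
  KK s * (cexp (-π * I * s / 2) * expZeta ((1 * q : ℝ) : UnitAddCircle) (s:ℂ) +
    cexp (π * I * s / 2) * expZeta ((-1 * q : ℝ) : UnitAddCircle) (s:ℂ))

lemma cont_ff (s : ℝ) (hs : 1 < s) : Continuous (ff s) := by
  unfold ff
  exact continuous_const.mul ((continuous_const.mul (cont_expZeta 1 s hs)).add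
    (continuous_const.mul (cont_expZeta (-1) s hs)))

lemma ff_eq (s : ℝ) (hs : 1 < s) (q : ℝ) : hurwitzZeta (q : UnitAddCircle) (1 - s) = ff s q := by
  rw [hurwitzZeta_one_sub]
  · simp [ff, KK]
  · intro n h
    have := congrArg Complex.re h
    simp at this
    linarith [Nat.cast_nonneg (α := ℝ) n]
  · right
    exact_mod_cast hs.ne'

lemma int_mul_ff (s : ℝ) (hs : 1 < s) (f : ℝ → ℂ) (hf : Continuous f) :
    ∫ q in (0:ℝ)..1, f q * ff s q = KK s *
     (cexp (-π * I * s / 2) * (∫ q in (0:ℝ)..1, f q * expZeta ((1 * q : ℝ) : UnitAddCircle) (s:ℂ)) +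
      cexp (π * I * s / 2) * (∫ q in (0:ℝ)..1, f q * expZeta ((-1 * q : ℝ) : UnitAddCircle) (s:ℂ))) := by
  rw [← intervalIntegral.integral_const_mul, ← intervalIntegral.integral_const_mul,
    ← intervalIntegral.integral_add, ← intervalIntegral.integral_const_mul]
  · congr 1; ext q; unfold ff; ring
  · exact (continuous_const.mul (hf.mul (cont_expZeta 1 s hs))).intervalIntegrable _ _
  · exact (continuous_const.mul (hf.mul (cont_expZeta (-1) s hs))).intervalIntegrable _ _

/-- `f` has the Fourier coefficients of `ζ(1-s, q)`. -/
def Good (s : ℝ) (f : ℝ → ℂ) : Prop := Continuous f ∧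
  (∀ q ∈ Ioo (0:ℝ) 1, hurwitzZeta (q : UnitAddCircle) (1 - s) = f q) ∧
  ∀ m : ℕ, m ≠ 0 →
    (∫ q in (0:ℝ)..1, f q * cexp (2 * π * I * (1 * q : ℝ) * m) =
      KK s * cexp (π * I * s / 2) * (1 / (m:ℂ) ^ (s:ℂ))) ∧
    (∫ q in (0:ℝ)..1, f q * cexp (2 * π * I * (-1 * q : ℝ) * m) =
      KK s * cexp (-π * I * s / 2) * (1 / (m:ℂ) ^ (s:ℂ)))

lemma good_ff (s : ℝ) (hs : 1 < s) : Good s (ff s) := by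
  refine ⟨cont_ff s hs, fun q _ => ff_eq s hs q, fun m hm => ⟨?_, ?_⟩⟩
  · simp_rw [mul_comm (ff s _)]
    rw [int_mul_ff s hs _ (cont_term 1 m), orth' 1 (Or.inl rfl) s hs m hm]
    have := orth (-1) (Or.inr rfl) s hs m hm
    rw [neg_neg] at this
    rw [this]; ring
  · simp_rw [mul_comm (ff s _)]
    rw [int_mul_ff s hs _ (cont_term (-1) m), orth' (-1) (Or.inr rfl) s hs m hm]
    have := orth (1) (Or.inl rfl) s hs m hm
    rw [this]; ring

lemma int_lin (c : ℂ) (hc : c ≠ 0) (h1 : cexp c = 1) :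
    ∫ q in (0:ℝ)..1, (1/2 - (q:ℂ)) * cexp (c * q) = -1 / c := by
  have hd (x : ℝ) (_ : x ∈ uIcc (0:ℝ) 1) :
      HasDerivAt (fun y : ℝ => (1/2 - (y:ℂ)) * cexp (c * y) / c + cexp (c * y) / c ^ 2)
        ((1/2 - (x:ℂ)) * cexp (c * x)) x := by
    have he : HasDerivAt (fun y : ℂ => cexp (c * y)) (cexp (c * x) * (c * 1)) (x:ℂ) :=
      ((hasDerivAt_id (x:ℂ)).const_mul c).cexp
    have hl : HasDerivAt (fun y : ℂ => 1/2 - y) (-1) (x:ℂ) := (hasDerivAt_id (x:ℂ)).const_sub _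
    have h := (((hl.mul he).div_const c).add (he.div_const (c ^ 2))).comp_ofReal
    have e : (-1 * cexp (c * x) + (1/2 - (x:ℂ)) * (cexp (c * x) * (c * 1))) / c +
        cexp (c * x) * (c * 1) / c ^ 2 = (1/2 - (x:ℂ)) * cexp (c * x) := by
      field_simp; ring
    rw [← e]
    exact h
  rw [intervalIntegral.integral_eq_sub_of_hasDerivAt hd]
  · simp [h1]; field_simp; ring
  · exact Continuous.intervalIntegrable (by fun_prop) _ _

lemma KK_one : KK 1 = 1 / (2 * π) := by
  simp [KK, Complex.cpow_neg_one]

lemma good_one : Good 1 (fun q => 1/2 - (q:ℂ)) := by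
  have hpi : (π:ℂ) ≠ 0 := by exact_mod_cast Real.pi_ne_zero
  refine ⟨by fun_prop, fun q hq => by simpa using hurwitzZeta_at_zero q hq, fun m hm => ⟨?_, ?_⟩⟩
  · have hm' : (m:ℂ) ≠ 0 := by exact_mod_cast hm
    have := int_lin (2 * π * I * ((m:ℤ):ℂ)) (by simp [hm]) (exp_two_pi_int _)
    have e : cexp (π * I * (1:ℝ) / 2) = I := by
      refine Eq.trans ?_ Complex.exp_pi_div_two_mul_I
      congr 1; push_cast; ring
    rw [e, KK_one]
    trans -1 / (2 * π * I * ((m:ℤ):ℂ))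
    · rw [← this]; congr 1; ext q; congr 2; push_cast; ring
    · push_cast; rw [Complex.cpow_one]; field_simp; simp
  · have hm' : (m:ℂ) ≠ 0 := by exact_mod_cast hm
    have := int_lin (2 * π * I * ((-m:ℤ):ℂ)) (by simp [hm]) (exp_two_pi_int _)
    have e : cexp (-π * I * (1:ℝ) / 2) = -I := by
      refine Eq.trans ?_ Complex.exp_neg_pi_div_two_mul_I
      congr 1; push_cast; ring
    rw [e, KK_one]
    trans -1 / (2 * π * I * ((-m:ℤ):ℂ))
    · rw [← this]; congr 1; ext q; congr 2; push_cast; ring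
    · push_cast; rw [Complex.cpow_one]; field_simp; simp

lemma main_good (s t : ℝ) (hs : 1 < s) (ht : 1 ≤ t) (f : ℝ → ℂ) (hf : Good t f) :
    ∫ q in (0:ℝ)..1, f q * ff s q =
      2 * KK s * KK t * riemannZeta ((s + t : ℝ) : ℂ) * (Real.cos (π * (s - t) / 2) : ℂ) := by
  obtain ⟨hc, -, hcoef⟩ := hf
  have hst : 1 < ((s + t : ℝ) : ℂ).re := by simp; linarith
  have hz : HasSum (fun n : ℕ => 1 / (n:ℂ) ^ ((s + t : ℝ) : ℂ)) (riemannZeta ((s + t : ℝ) : ℂ)) := by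
    rw [zeta_eq_tsum_one_div_nat_cpow hst]
    exact (Complex.summable_one_div_nat_cpow.2 hst).hasSum
  have hs0 : (s:ℂ) ≠ 0 := by exact_mod_cast (by linarith : s ≠ 0)
  have hst0 : ((s + t : ℝ):ℂ) ≠ 0 := by exact_mod_cast (by linarith : s + t ≠ 0)
  have hmul (m : ℕ) (hm : m ≠ 0) : (m:ℂ) ^ ((s + t : ℝ) : ℂ) = (m:ℂ) ^ (t:ℂ) * (m:ℂ) ^ (s:ℂ) := by
    rw [← Complex.cpow_add _ _ (by exact_mod_cast hm)]; congr 1; push_cast; ring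
  have h1 : ∫ q in (0:ℝ)..1, f q * expZeta ((1 * q : ℝ) : UnitAddCircle) (s:ℂ) =
      KK t * cexp (π * I * t / 2) * riemannZeta ((s + t : ℝ) : ℂ) := by
    refine (hasSum_int 1 s hs f hc).unique ?_
    convert! hz.mul_left (KK t * cexp (π * I * t / 2)) using 2 with m
    rcases eq_or_ne m 0 with rfl | hm
    · simp only [Nat.cast_zero]; rw [Complex.zero_cpow hs0, Complex.zero_cpow hst0]; simp
    · rw [(hcoef m hm).1, hmul m hm]; ring
  have h2 : ∫ q in (0:ℝ)..1, f q * expZeta ((-1 * q : ℝ) : UnitAddCircle) (s:ℂ) =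
      KK t * cexp (-π * I * t / 2) * riemannZeta ((s + t : ℝ) : ℂ) := by
    refine (hasSum_int (-1) s hs f hc).unique ?_
    convert! hz.mul_left (KK t * cexp (-π * I * t / 2)) using 2 with m
    rcases eq_or_ne m 0 with rfl | hm
    · simp only [Nat.cast_zero]; rw [Complex.zero_cpow hs0, Complex.zero_cpow hst0]; simp
    · rw [(hcoef m hm).2, hmul m hm]; ring
  rw [int_mul_ff s hs f hc, h1, h2, Complex.ofReal_cos, Complex.cos]
  have e1 : cexp (((π * (s - t) / 2 : ℝ) : ℂ) * I) = cexp (π * I * s / 2) * cexp (-π * I * t / 2) := by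
    rw [← Complex.exp_add]; congr 1; push_cast; ring
  have e2 : cexp (-((π * (s - t) / 2 : ℝ) : ℂ) * I) = cexp (-π * I * s / 2) * cexp (π * I * t / 2) := by
    rw [← Complex.exp_add]; congr 1; push_cast; ring
  rw [e1, e2]; ring

lemma main_one : ∫ q in (0:ℝ)..1, (1/2 - (q:ℂ)) * (1/2 - (q:ℂ)) =
      2 * KK 1 * KK 1 * riemannZeta ((1 + 1 : ℝ) : ℂ) * (Real.cos (π * (1 - 1) / 2) : ℂ) := by
  have hpi : (π:ℂ) ≠ 0 := by exact_mod_cast Real.pi_ne_zero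
  have h : ∫ q in (0:ℝ)..1, (1/2 - (q:ℂ)) * (1/2 - (q:ℂ)) = ((∫ q in (0:ℝ)..1, (1/4 - q + q^2) : ℝ) : ℂ) := by
    rw [← intervalIntegral.integral_ofReal]
    congr 1; ext q; push_cast; ring
  have h' : ∫ q in (0:ℝ)..1, (1/4 - q + q^2) = 1/12 := by
    rw [intervalIntegral.integral_add, intervalIntegral.integral_sub, integral_pow, integral_id]
    · simp; norm_num
    all_goals exact Continuous.intervalIntegrable (by fun_prop) _ _
  rw [h, h', KK_one, show (1 + 1 : ℝ) = 2 by norm_num]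
  push_cast
  rw [riemannZeta_two]
  simp
  field_simp
  norm_num

lemma main_all (s t : ℝ) (hs : 1 ≤ s) (ht : 1 ≤ t) :
    ∫ q in (0:ℝ)..1, hurwitzZeta (q : UnitAddCircle) (1 - t) * hurwitzZeta (q : UnitAddCircle) (1 - s) =
      2 * KK s * KK t * riemannZeta ((s + t : ℝ) : ℂ) * (Real.cos (π * (s - t) / 2) : ℂ) := by
  have red (f g : ℝ → ℂ) (hf : Good t f) (hg : Good s g) :
      ∫ q in (0:ℝ)..1, hurwitzZeta (q : UnitAddCircle) (1 - t) * hurwitzZeta (q : UnitAddCircle) (1 - s) =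
      ∫ q in (0:ℝ)..1, f q * g q := by
    refine intervalIntegral.integral_congr_ae ?_
    filter_upwards [MeasureTheory.Measure.ae_ne MeasureTheory.volume (1:ℝ)] with q hq1 hq
    rw [uIoc_of_le zero_le_one] at hq
    have hq' : q ∈ Ioo (0:ℝ) 1 := ⟨hq.1, lt_of_le_of_ne hq.2 hq1⟩
    rw [hf.2.1 q hq', hg.2.1 q hq']
  rcases eq_or_lt_of_le hs with rfl | hs'
  · rcases eq_or_lt_of_le ht with rfl | ht'
    · rw [red _ _ good_one good_one, main_one]
    · rw [red _ _ (good_ff t ht') good_one]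
      simp_rw [mul_comm (ff t _)]
      rw [main_good t 1 ht' le_rfl _ good_one]
      rw [show π * (t - 1) / 2 = -(π * (1 - t) / 2) by ring, Real.cos_neg, add_comm t 1]
      ring
  · rcases eq_or_lt_of_le ht with rfl | ht'
    · rw [red _ _ good_one (good_ff s hs'), main_good s 1 hs' le_rfl _ good_one]
    · rw [red _ _ (good_ff t ht') (good_ff s hs'), main_good s t hs' ht _ (good_ff t ht')]

lemma F_eq (F : ℂ → ℝ → ℂ)
    (hF : ∀ q : ℝ, 0 < q → AnalyticOn ℂ (fun z => F z q) {(1 : ℂ)}ᶜ)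
    (hFeq : ∀ w : ℂ, 1 < w.re → ∀ q : ℝ, 0 < q →
      F w q = ∑' n : ℕ, 1 / ((n : ℂ) + (q : ℂ)) ^ w) (q : ℝ) (hq : q ∈ Ioc (0:ℝ) 1) (z : ℂ) (hz : z ≠ 1) :
    F z q = hurwitzZeta (q : UnitAddCircle) z := by
  have h1 : AnalyticOnNhd ℂ (fun z => F z q) {(1 : ℂ)}ᶜ :=
    (isOpen_compl_singleton.analyticOn_iff_analyticOnNhd).1 (hF q hq.1)
  have h2 : AnalyticOnNhd ℂ (hurwitzZeta (q : UnitAddCircle)) {(1 : ℂ)}ᶜ :=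
    DifferentiableOn.analyticOnNhd
      (fun s hs => (differentiableAt_hurwitzZeta _ hs).differentiableWithinAt) isOpen_compl_singleton
  refine h1.eqOn_of_preconnected_of_eventuallyEq h2
    (isConnected_compl_singleton_of_one_lt_rank (by simp) 1).isPreconnected (z₀ := 2) (by simp) ?_ hz
  filter_upwards [(isOpen_lt continuous_const Complex.continuous_re).mem_nhds
        (show (1:ℝ) < (2:ℂ).re by simp)] with s hs
  rw [hFeq s hs q hq.1]
  exact (hasSum_hurwitzZeta_of_one_lt_re ⟨hq.1.le, hq.2⟩ hs).tsum_eq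

/-- Let `F z q` be (any) analytic continuation in `z` of the Hurwitz zeta function
`ζ(z,q)` for each fixed `q > 0`.  For real `z, z' ≤ 0`,
`∫₀¹ ζ(z',q) ζ(z,q) dq = (2 Γ(1-z) Γ(1-z') / (2π)^{2-z-z'}) ζ(2-z-z') cos(π(z-z')/2)`. -/
theorem integral_hurwitzZeta_mul (F : ℂ → ℝ → ℂ)
    (hF : ∀ q : ℝ, 0 < q → AnalyticOn ℂ (fun z => F z q) {(1 : ℂ)}ᶜ)
    (hFeq : ∀ w : ℂ, 1 < w.re → ∀ q : ℝ, 0 < q →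
      F w q = ∑' n : ℕ, 1 / ((n : ℂ) + (q : ℂ)) ^ w)
    (z z' : ℝ) (hz : z ≤ 0) (hz' : z' ≤ 0) :
    ∫ q in (0 : ℝ)..1, F (z' : ℂ) q * F (z : ℂ) q =
      2 * Complex.Gamma (1 - (z : ℂ)) * Complex.Gamma (1 - (z' : ℂ)) /
          ((2 * π : ℝ) : ℂ) ^ ((2 - z - z' : ℝ) : ℂ) *
        riemannZeta ((2 - z - z' : ℝ) : ℂ) *
        (Real.cos (π * (z - z') / 2) : ℂ) := by
  have hpi : (2 * π : ℂ) ≠ 0 := by exact_mod_cast Real.two_pi_pos.ne'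
  have hne (x : ℝ) (hx : x ≤ 0) : (x:ℂ) ≠ 1 := by
    exact_mod_cast (by linarith : x ≠ 1)
  have h := main_all (1 - z) (1 - z') (by linarith) (by linarith)
  have e : ∫ q in (0 : ℝ)..1, F (z' : ℂ) q * F (z : ℂ) q =
      ∫ q in (0:ℝ)..1, hurwitzZeta (q : UnitAddCircle) (1 - (1 - z' : ℝ)) *
        hurwitzZeta (q : UnitAddCircle) (1 - (1 - z : ℝ)) := by
    refine intervalIntegral.integral_congr_ae ?_
    filter_upwards with q hq
    rw [uIoc_of_le zero_le_one] at hq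
    rw [F_eq F hF hFeq q hq _ (hne z hz), F_eq F hF hFeq q hq _ (hne z' hz')]
    push_cast
    simp
  rw [e, h, show (1 - z) + (1 - z') = 2 - z - z' by ring,
    show π * ((1 - z) - (1 - z')) / 2 = -(π * (z - z') / 2) by ring, Real.cos_neg]
  congr 2
  unfold KK
  rw [div_eq_mul_inv, ← Complex.cpow_neg]
  have : ((2 * π : ℝ) : ℂ) ^ (-((2 - z - z' : ℝ) : ℂ)) =
      (2 * π : ℂ) ^ (-((1 - z : ℝ):ℂ)) * (2 * π : ℂ) ^ (-((1 - z' : ℝ):ℂ)) := by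
    rw [← Complex.cpow_add _ _ hpi]; push_cast; congr 1; ring
  rw [this]
  push_cast
  ring
end
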